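/- arXiv:1606.00679 — 3 statements merged into one kernel-verified Lean document; each statement's English description precedes it below -/
import Mathlib

section
/- Let G be a lacunary hyperbolic group, written as a direct limit of δ_k-hyperbolic groups (G_k,S_k) with inj(η_k)/δ_k → ∞ and G_0 free with basis S_0. Then every endomorphism φ of G coherently lifts from some step n; in other words, End(G) is the increasing union over n ∈ ℕ of the sub-semigroups End_n(G) of endomorphisms coherently lifting from step n, and Out-End(G) is the increasing union of the corresponding quotients Out-End_n(G) modulo inner automorphisms. -/
/-!
A marked group `(H, S)` satisfying the four-point condition with constant `δ` is presented by
its relators of length at most `4δ + 9` (`ker_le_of_short`). Indeed, cut a relator `w` of length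
`n > 4δ + 9` as `w = a b c d` with `a`, `b`, `c` of length `q = ⌊n / 4⌋`. The four-point condition
for the vertices `1, a, ab, abc` of the loop `w` shows that one of the diagonals `ab`, `bc` is
shorter than `2q` in `H`; replacing it by a geodesic word writes `w` as a product of
conjugates of strictly shorter relators.

Given an endomorphism `φ` of `G`, choose any lift `ψ` to the free group; it multiplies word
lengths by at most some constant `C` (`exists_norm_map_le`). For `ψ` to descend to `G_k` it
suffices that `ψ` sends each relator `w` of `G_k` of length at most `4δ_k + 9` to a relator of
`G_k`. It certainly sends `w` to a relator of `G`.

* If `δ_k ≥ 1`, then `ψ w` has length at most `13 C δ_k`, which is at most the injectivity radius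
  `R_k` for large `k`, so `ψ w` is already trivial in `G_k`.
* If `δ_k < 1`, then `w` has length at most `13`. Only finitely many words are concerned, so for
  all large `k` the images under `ψ` of those that are relators of `G` are trivial in `G_k`.

The second case cannot be skipped, since `R_k / δ_k → ∞` does not force `R_k → ∞`.
-/

open Filter Set Function

namespace LacHyp

/-! ### Word length and norms of endomorphisms for marked groups -/

/-- Word length of `g` in the group `H` marked by the epimorphism `p` from a free group:
the least length of a word in the (images of the) generators representing `g`. -/
noncomputable def wlen {ι : Type} [DecidableEq ι] {H : Type*} [Group H]
    (p : FreeGroup ι →* H) (g : H) : ℕ :=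
  sInf {n | ∃ w : FreeGroup ι, p w = g ∧ w.norm = n}

/-- The norm `|φ| = max_{s ∈ S} |φ(s)|_S` of an endomorphism of a marked group. -/
noncomputable def enorm {ι : Type} [Fintype ι] [DecidableEq ι] {H : Type*} [Group H]
    (p : FreeGroup ι →* H) (φ : H →* H) : ℕ :=
  Finset.univ.sup fun i : ι => wlen p (φ (p (FreeGroup.of i)))

/-- The conjugacy-invariant norm `‖φ‖ = inf_g |ι_g ∘ φ|` of an endomorphism. -/
noncomputable def cnorm {ι : Type} [Fintype ι] [DecidableEq ι] {H : Type*} [Group H]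
    (p : FreeGroup ι →* H) (φ : H →* H) : ℕ :=
  sInf (Set.range fun g : H => enorm p ((MulAut.conj g).toMonoidHom.comp φ))

/-- The marked group `(H, S)` is `δ`-hyperbolic: Gromov's four-point condition for the
word metric `d(x, y) = |x⁻¹y|_S`. -/
def MarkedHyperbolic {ι : Type} [DecidableEq ι] {H : Type*} [Group H]
    (p : FreeGroup ι →* H) (δ : ℝ) : Prop :=
  ∀ x y z w : H,
    (wlen p (x⁻¹ * y) : ℝ) + (wlen p (z⁻¹ * w) : ℝ) ≤
      max ((wlen p (x⁻¹ * z) : ℝ) + (wlen p (y⁻¹ * w) : ℝ))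
        ((wlen p (x⁻¹ * w) : ℝ) + (wlen p (y⁻¹ * z) : ℝ)) + 2 * δ

/-- `η` is injective on every ball of radius `R` of the marked group `(H, S)`. -/
def InjOnBalls {ι : Type} [DecidableEq ι] {H G' : Type*} [Group H] [Group G']
    (p : FreeGroup ι →* H) (η : H →* G') (R : ℕ) : Prop :=
  ∀ c x y : H, wlen p (c⁻¹ * x) ≤ R → wlen p (c⁻¹ * y) ≤ R → η x = η y → x = y

/-! ### Lacunary hyperbolic groups as limits of hyperbolic groups -/

/-- A presentation of the marked group `(G, S)` (with `S` indexed by `ι`, via the marking `m`)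
as a direct limit of `δ_k`-hyperbolic marked groups `(G_k, S_k)` in which the natural
epimorphisms `η_k : G_k → G` are injective on balls of radius `R_k` with `R_k/δ_k → ∞`.
This is Ol'shanskii–Osin–Sapir's characterization of lacunary hyperbolicity. -/
structure LHSeq (ι : Type) [Fintype ι] [DecidableEq ι] (G : Type*) [Group G]
    (m : FreeGroup ι →* G) where
  m_surj : Function.Surjective m
  /-- the approximating groups `G_k` -/
  Gk : ℕ → Type
  [grp : ∀ k, Group (Gk k)]
  /-- the markings `π_k` of the `G_k` (so `S_k` is the image of the generators) -/
  pk : ∀ k, FreeGroup ι →* Gk k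
  /-- the natural epimorphisms `η_k : G_k → G` -/
  ηk : ∀ k, Gk k →* G
  pk_surj : ∀ k, Function.Surjective (pk k)
  /-- `G_{k+1}` is a marked quotient of `G_k` (this encodes the bonding epimorphisms
  `α_k : (G_k, S_k) ↠ (G_{k+1}, S_{k+1})`) -/
  ker_mono : ∀ k, (pk k).ker ≤ (pk (k + 1)).ker
  ηk_comp : ∀ k, (ηk k).comp (pk k) = m
  /-- `G` is the direct limit of the `G_k` -/
  limit : ∀ w : FreeGroup ι, m w = 1 → ∃ k, pk k w = 1
  /-- the hyperbolicity constants -/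
  δ : ℕ → ℝ
  δ_pos : ∀ k, 0 < δ k
  hyp : ∀ k, MarkedHyperbolic (pk k) (δ k)
  /-- radii of injectivity of the `η_k` -/
  R : ℕ → ℕ
  inj : ∀ k, InjOnBalls (pk k) (ηk k) (R k)
  /-- the lacunarity condition `inj(η_k)/δ_k → ∞` -/
  lac : Filter.Tendsto (fun k => (R k : ℝ) / δ k) Filter.atTop Filter.atTop

attribute [instance] LHSeq.grp

/-- A finitely generated group is lacunary hyperbolic if it admits an approximating
sequence as above. -/
def LacunaryHyperbolic (G : Type*) [Group G] : Prop :=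
  ∃ (ι : Type) (_ : Fintype ι) (_ : DecidableEq ι) (m : FreeGroup ι →* G),
    Nonempty (LHSeq ι G m)

section Lifts

variable {ι : Type} [Fintype ι] [DecidableEq ι] {G : Type*} [Group G] {m : FreeGroup ι →* G}

/-- The endomorphism `ψ` of the free group `G_0` descends to an endomorphism of `G_k`. -/
def LiftsAt (D : LHSeq ι G m) (ψ : FreeGroup ι →* FreeGroup ι) (k : ℕ) : Prop :=
  ∃ φk : D.Gk k →* D.Gk k, φk.comp (D.pk k) = (D.pk k).comp ψ

/-- `φ` coherently lifts from step `n`: some lift `ψ` of `φ` to the free group `G_0`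
induces endomorphisms of `G_k` for all `k ≥ n`. -/
def CoherentlyLifts (D : LHSeq ι G m) (φ : G →* G) (n : ℕ) : Prop :=
  ∃ ψ : FreeGroup ι →* FreeGroup ι, m.comp ψ = φ.comp m ∧ ∀ k, n ≤ k → LiftsAt D ψ k

end Lifts

/-! ### ℝ-trees and property (FR) -/

/-- Gromov's four-point condition for a metric space. -/
def GromovHyperbolicSpace (X : Type*) [MetricSpace X] (δ : ℝ) : Prop :=
  ∀ x y z w : X, dist x y + dist z w ≤ max (dist x z + dist y w) (dist x w + dist y z) + 2 * δ

/-- A geodesic metric space. -/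
def GeodesicSpace (X : Type*) [MetricSpace X] : Prop :=
  ∀ x y : X, ∃ f : ℝ → X, f 0 = x ∧ f (dist x y) = y ∧
    ∀ s ∈ Set.Icc (0 : ℝ) (dist x y), ∀ t ∈ Set.Icc (0 : ℝ) (dist x y),
      dist (f s) (f t) = |s - t|

/-- An ℝ-tree: a geodesic, 0-hyperbolic metric space. -/
def IsRTree (X : Type*) [MetricSpace X] : Prop :=
  GeodesicSpace X ∧ GromovHyperbolicSpace X 0

/-- Property (FR): every isometric action on an ℝ-tree has a global fixed point. -/
def PropertyFR (G : Type*) [Group G] : Prop :=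
  ∀ (X : Type) (_ : MetricSpace X), IsRTree X →
    ∀ ρ : G →* (X ≃ᵢ X), ∃ x : X, ∀ g : G, ρ g x = x

/-- Minimal displacement `λ(H, X) = inf_x max_{s ∈ S} d(s·x, x)` of an isometric action of
the marked group `(H, S)` on `X`. -/
noncomputable def minDisp {ι : Type} [Fintype ι] {H : Type*} [Group H] {X : Type*}
    [MetricSpace X] (p : FreeGroup ι →* H) (ρ : H →* (X ≃ᵢ X)) : ℝ :=
  ⨅ x : X, ⨆ i : ι, dist (ρ (p (FreeGroup.of i)) x) x

/-! ### Outer automorphisms -/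

/-- The subgroup of inner automorphisms. -/
def innerAut (G : Type*) [Group G] : Subgroup (MulAut G) :=
  (MulAut.conj : G →* MulAut G).range

instance innerAut_normal (G : Type*) [Group G] : (innerAut G).Normal := by
  constructor
  rintro x ⟨g, rfl⟩ σ
  refine ⟨σ g, ?_⟩
  ext h
  simp [MulAut.conj, mul_assoc]

/-- The outer automorphism group `Out(G) = Aut(G)/Inn(G)`. -/
abbrev OutAut (G : Type*) [Group G] := MulAut G ⧸ innerAut G

/-- The norm `‖Φ‖` of an outer automorphism class. -/
noncomputable def outNorm {ι : Type} [Fintype ι] [DecidableEq ι] {G : Type*} [Group G]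
    (m : FreeGroup ι →* G) (Φ : OutAut G) : ℕ :=
  sInf {n | ∃ φ : MulAut G, (QuotientGroup.mk φ : OutAut G) = Φ ∧ cnorm m φ.toMonoidHom = n}

/-- A group is locally finite if all its finitely generated subgroups are finite. -/
def LocallyFiniteGroup (G : Type*) [Group G] : Prop :=
  ∀ H : Subgroup G, H.FG → Finite H

/-! ### Hyperbolic groups, elementary subgroups, `E_H(G)` -/

/-- A hyperbolic group: some marking by a finite generating set is `δ`-hyperbolic. -/
def HyperbolicGroup (H : Type*) [Group H] : Prop :=
  ∃ (ι : Type) (_ : Fintype ι) (_ : DecidableEq ι) (p : FreeGroup ι →* H) (δ : ℝ),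
    Function.Surjective p ∧ 0 ≤ δ ∧ MarkedHyperbolic p δ

/-- A group is virtually cyclic (elementary) if it has a cyclic subgroup of finite index. -/
def VirtuallyCyclic (K : Type*) [Group K] : Prop :=
  ∃ C : Subgroup K, IsCyclic C ∧ C.FiniteIndex

/-- `E_H(K)`: the set of elements of `H` whose orbit under conjugation by the subgroup `K`
is finite. -/
def EHset {H : Type*} [Group H] (K : Subgroup H) : Set H :=
  {h : H | (Set.range fun g : K => (g : H) * h * (g : H)⁻¹).Finite}

/-- Equationally Noetherian group: every system of equations (in `n` variables) has the same
solution set as a finite subsystem. -/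
def EquationallyNoetherian (G : Type*) [Group G] : Prop :=
  ∀ (n : ℕ) (S : Set (FreeGroup (Fin n))), ∃ S₀ : Finset (FreeGroup (Fin n)),
    ↑S₀ ⊆ S ∧ ∀ x : Fin n → G,
      (∀ w ∈ S₀, FreeGroup.lift x w = 1) → ∀ w ∈ S, FreeGroup.lift x w = 1


/-! ### Hyperbolic marked groups are presented by short relators -/

section ShortRelators

variable {ι : Type} [DecidableEq ι]

theorem wlen_map_le {H : Type*} [Group H] (p : FreeGroup ι →* H) (w : FreeGroup ι) :
    wlen p (p w) ≤ w.norm :=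
  Nat.sInf_le ⟨w, rfl, rfl⟩

theorem exists_norm_eq_wlen {H : Type*} [Group H] {p : FreeGroup ι →* H}
    (hp : Function.Surjective p) (g : H) : ∃ u : FreeGroup ι, p u = g ∧ u.norm = wlen p g := by
  obtain ⟨w, hw⟩ := hp g
  exact Nat.sInf_mem (s := {n | ∃ w : FreeGroup ι, p w = g ∧ w.norm = n}) ⟨w.norm, w, hw, rfl⟩

theorem exists_mul_eq_norm_le (w : FreeGroup ι) (n : ℕ) :
    ∃ a b : FreeGroup ι, w = a * b ∧ a.norm ≤ n ∧ b.norm ≤ w.norm - n := by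
  refine ⟨FreeGroup.mk (w.toWord.take n), FreeGroup.mk (w.toWord.drop n), ?_, ?_, ?_⟩
  · rw [FreeGroup.mul_mk, List.take_append_drop, FreeGroup.mk_toWord]
  · exact FreeGroup.norm_mk_le.trans (by simp)
  · exact FreeGroup.norm_mk_le.trans (by simp [FreeGroup.norm])

/-- A `δ`-hyperbolic marked group is presented by its relators of length at most `4δ + 9`: any
normal subgroup containing these relators contains all relators. -/
theorem ker_le_of_short {H : Type*} [Group H] {p : FreeGroup ι →* H}
    (hp : Function.Surjective p) {δ : ℝ} (hδ : MarkedHyperbolic p δ)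
    (K : Subgroup (FreeGroup ι)) [hK : K.Normal]
    (hshort : ∀ w : FreeGroup ι, p w = 1 → (w.norm : ℝ) ≤ 4 * δ + 9 → w ∈ K) :
    p.ker ≤ K := by
  suffices h : ∀ n : ℕ, ∀ w : FreeGroup ι, w.norm = n → p w = 1 → w ∈ K from
    fun w hw => h _ w rfl hw
  intro n
  induction n using Nat.strong_induction_on with
  | _ n ih =>
  intro w hn hw
  by_cases hlen : (w.norm : ℝ) ≤ 4 * δ + 9
  · exact hshort w hw hlen
  push Not at hlen
  obtain ⟨q, hq⟩ : ∃ q, q = n / 4 := ⟨_, rfl⟩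
  obtain ⟨a, w₁, rfl, ha, hw₁⟩ := exists_mul_eq_norm_le w q
  obtain ⟨b, w₂, rfl, hb, hw₂⟩ := exists_mul_eq_norm_le w₁ q
  obtain ⟨c, d, rfl, hc, hd⟩ := exists_mul_eq_norm_le w₂ q
  have hd' : d.norm ≤ n - 3 * q := by omega
  -- One of the two diagonals of the quadrilateral `1, a, ab, abc` is a shortcut.
  have hdiag : wlen p (p (a * b)) < 2 * q ∨ wlen p (p (b * c)) < 2 * q := by
    by_contra! hcon
    have h4 := hδ 1 (p (a * b)) (p a) (p (a * b * c))
    have habc : p (a * b * c) = p d⁻¹ := by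
      rw [map_inv, eq_inv_iff_mul_eq_one, ← map_mul, ← hw]
      simp only [mul_assoc]
    have e₁ : (p a)⁻¹ * p (a * b * c) = p (b * c) := by simp [mul_assoc]
    have e₂ : (p (a * b))⁻¹ * p (a * b * c) = p c := by simp [mul_assoc]
    have e₃ : (p (a * b))⁻¹ * p a = p b⁻¹ := by simp
    rw [e₁, e₂, e₃, habc, inv_one, one_mul, one_mul, one_mul] at h4
    have la := (wlen_map_le p a).trans ha
    have lb := (wlen_map_le p b⁻¹).trans (FreeGroup.norm_inv_eq.trans_le hb)
    have lc := (wlen_map_le p c).trans hc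
    have ld := (wlen_map_le p d⁻¹).trans (FreeGroup.norm_inv_eq.trans_le hd')
    have ld' : wlen p (p d⁻¹) ≤ q + 3 := by omega
    have hn4 : n ≤ 4 * q + 3 := by omega
    have hmax : max ((wlen p (p a) : ℝ) + wlen p (p c)) (wlen p (p d⁻¹) + wlen p (p b⁻¹))
        ≤ 2 * q + 3 := by
      apply max_le <;> norm_cast <;> omega
    have hsum : (4 * q : ℝ) ≤ wlen p (p (a * b)) + wlen p (p (b * c)) := by
      norm_cast; omega
    rw [hn] at hlen
    have : (n : ℝ) ≤ 4 * q + 3 := by exact_mod_cast hn4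
    linarith
  rcases hdiag with h | h
  · obtain ⟨u, hu, hul⟩ := exists_norm_eq_wlen hp (p (a * b))
    have k₁ : a * b * u⁻¹ ∈ K := by
      refine ih _ ?_ _ rfl (by rw [map_mul, map_inv, hu, mul_inv_cancel])
      have := FreeGroup.norm_mul_le (a * b) u⁻¹
      have := FreeGroup.norm_mul_le a b
      rw [FreeGroup.norm_inv_eq] at *
      omega
    have k₂ : u * (c * d) ∈ K := by
      refine ih _ ?_ _ rfl (by rw [map_mul, hu, ← map_mul, ← hw]; simp only [mul_assoc])
      have := FreeGroup.norm_mul_le u (c * d)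
      have := FreeGroup.norm_mul_le c d
      omega
    convert K.mul_mem k₁ k₂ using 1
    group
  · obtain ⟨u, hu, hul⟩ := exists_norm_eq_wlen hp (p (b * c))
    have k₁ : b * c * u⁻¹ ∈ K := by
      refine ih _ ?_ _ rfl (by rw [map_mul, map_inv, hu, mul_inv_cancel])
      have := FreeGroup.norm_mul_le (b * c) u⁻¹
      have := FreeGroup.norm_mul_le b c
      rw [FreeGroup.norm_inv_eq] at *
      omega
    have k₂ : a * (u * d) ∈ K := by
      refine ih _ ?_ _ rfl ?_
      · have := FreeGroup.norm_mul_le a (u * d)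
        have := FreeGroup.norm_mul_le u d
        omega
      · rw [map_mul, map_mul, hu, ← map_mul, ← map_mul, ← hw]
        simp only [mul_assoc]
    convert K.mul_mem (hK.conj_mem _ k₁ a) k₂ using 1
    group

end ShortRelators

/-! ### Lifting endomorphisms -/

theorem exists_lift {ι : Type} {G : Type*} [Group G] {m : FreeGroup ι →* G}
    (hm : Function.Surjective m) (φ : G →* G) :
    ∃ ψ : FreeGroup ι →* FreeGroup ι, m.comp ψ = φ.comp m := by
  choose f hf using fun i : ι => hm (φ (m (FreeGroup.of i)))
  exact ⟨FreeGroup.lift f, by ext i; simp [hf]⟩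

section Lifting

variable {ι : Type} [Fintype ι] [DecidableEq ι]

theorem exists_norm_map_le (ψ : FreeGroup ι →* FreeGroup ι) :
    ∃ C : ℕ, ∀ w : FreeGroup ι, (ψ w).norm ≤ C * w.norm := by
  let C := Finset.univ.sup fun i : ι => (ψ (FreeGroup.of i)).norm
  have hC : ∀ i, (ψ (FreeGroup.of i)).norm ≤ C := fun i =>
    Finset.le_sup (f := fun i : ι => (ψ (FreeGroup.of i)).norm) (Finset.mem_univ i)
  have key : ∀ l : List (ι × Bool), (ψ (FreeGroup.mk l)).norm ≤ C * l.length := by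
    intro l
    induction l with
    | nil => simp [← FreeGroup.one_eq_mk]
    | cons x l ih =>
      obtain ⟨i, b⟩ := x
      have hx : (ψ (FreeGroup.mk [(i, b)])).norm ≤ C := by
        cases b
        · have : FreeGroup.mk [(i, false)] = (FreeGroup.of i)⁻¹ := by
            simp [FreeGroup.of, FreeGroup.inv_mk, FreeGroup.invRev]
          rw [this, map_inv, FreeGroup.norm_inv_eq]
          exact hC i
        · exact hC i
      have e : FreeGroup.mk ((i, b) :: l) = FreeGroup.mk [(i, b)] * FreeGroup.mk l := by
        rw [FreeGroup.mul_mk]; rfl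
      rw [e, map_mul, List.length_cons, mul_add, mul_one]
      have := FreeGroup.norm_mul_le (ψ (FreeGroup.mk [(i, b)])) (ψ (FreeGroup.mk l))
      omega
  exact ⟨C, fun w => by simpa [FreeGroup.mk_toWord, FreeGroup.norm] using key w.toWord⟩

theorem finite_norm_le (n : ℕ) : {w : FreeGroup ι | w.norm ≤ n}.Finite :=
  (List.finite_length_le (ι × Bool) n).preimage FreeGroup.toWord_injective.injOn

variable {G : Type*} [Group G] {m : FreeGroup ι →* G}

theorem liftsAt_of_ker_le (D : LHSeq ι G m) (ψ : FreeGroup ι →* FreeGroup ι) (k : ℕ)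
    (h : (D.pk k).ker ≤ ((D.pk k).comp ψ).ker) : LiftsAt D ψ k :=
  ⟨(D.pk k).liftOfSurjective (D.pk_surj k) ⟨(D.pk k).comp ψ, h⟩,
    MonoidHom.liftOfRightInverse_comp _ _ _ _⟩

theorem ηk_pk (D : LHSeq ι G m) (k : ℕ) (w : FreeGroup ι) : D.ηk k (D.pk k w) = m w :=
  DFunLike.congr_fun (D.ηk_comp k) w

/-- Each relator of `G` is a relator of `G_k` for all large `k`. -/
theorem eventually_pk_eq_one (D : LHSeq ι G m) {w : FreeGroup ι} (hw : m w = 1) :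
    ∀ᶠ k in atTop, D.pk k w = 1 := by
  obtain ⟨k₀, hk₀⟩ := D.limit w hw
  filter_upwards [eventually_ge_atTop k₀] with k hk
  exact monotone_nat_of_le_succ (f := fun k => (D.pk k).ker) D.ker_mono hk hk₀

/-- A relator of `G` of length at most the injectivity radius `R_k` is a relator of `G_k`. -/
theorem pk_eq_one_of_norm_le (D : LHSeq ι G m) {k : ℕ} {w : FreeGroup ι} (hw : m w = 1)
    (hR : w.norm ≤ D.R k) : D.pk k w = 1 := by
  refine D.inj k 1 _ _ ?_ ?_ ?_
  · simpa using (wlen_map_le (D.pk k) w).trans hR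
  · simpa using (wlen_map_le (D.pk k) 1).trans (by simp)
  · rw [ηk_pk, hw, map_one]

/-- Every lift of `φ` to the free group descends to `G_k` for all large `k`. -/
theorem eventually_liftsAt (D : LHSeq ι G m) {φ : G →* G} {ψ : FreeGroup ι →* FreeGroup ι}
    (hψ : m.comp ψ = φ.comp m) : ∀ᶠ k in atTop, LiftsAt D ψ k := by
  obtain ⟨C, hC⟩ := exists_norm_map_le ψ
  have hrel : ∀ w, m w = 1 → m (ψ w) = 1 := fun w hw => by
    have := DFunLike.congr_fun hψ w
    simpa [hw] using this
  have hfin : ∀ᶠ k in atTop, ∀ w ∈ {w : FreeGroup ι | w.norm ≤ 13}, m w = 1 →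
      D.pk k (ψ w) = 1 := by
    rw [(finite_norm_le 13).eventually_all]
    intro w _
    by_cases hw : m w = 1
    · filter_upwards [eventually_pk_eq_one D (hrel w hw)] with k hk _ using hk
    · exact Eventually.of_forall fun k h => absurd h hw
  filter_upwards [hfin, D.lac.eventually_ge_atTop (13 * C : ℝ)] with k hk hlac
  refine liftsAt_of_ker_le D ψ k (ker_le_of_short (D.pk_surj k) (D.hyp k) _ ?_)
  intro w hw hlen
  have hmw : m w = 1 := by rw [← ηk_pk D k, hw, map_one]
  rw [MonoidHom.mem_ker, MonoidHom.comp_apply]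
  rcases lt_or_ge (D.δ k) 1 with hδ | hδ
  · refine hk w ?_ hmw
    have : (w.norm : ℝ) ≤ 13 := by linarith
    exact_mod_cast this
  · refine pk_eq_one_of_norm_le D (hrel w hmw) ?_
    rw [le_div_iff₀ (D.δ_pos k)] at hlac
    have h₁ : ((ψ w).norm : ℝ) ≤ C * w.norm := by exact_mod_cast hC w
    have h₂ : (C * w.norm : ℝ) ≤ C * (13 * D.δ k) := by
      gcongr
      linarith
    have : ((ψ w).norm : ℝ) ≤ D.R k := by linarith
    exact_mod_cast this

theorem exists_coherentlyLifts (D : LHSeq ι G m) (φ : G →* G) :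
    ∃ n : ℕ, CoherentlyLifts D φ n := by
  obtain ⟨ψ, hψ⟩ := exists_lift D.m_surj φ
  obtain ⟨n, hn⟩ := eventually_atTop.mp (eventually_liftsAt D hψ)
  exact ⟨n, ψ, hψ, hn⟩

end Lifting

/-- Corollary 3.5: every endomorphism of a lacunary hyperbolic group
coherently lifts from some step `n`; hence `End(G)` (and `Out-End(G)`) is the increasing
union of the sub-semigroups `End_n(G)` (resp. their images mod inner automorphisms). -/
theorem end_eq_iUnion_coherent {ι : Type} [Fintype ι] [DecidableEq ι] {G : Type} [Group G]
    {m : FreeGroup ι →* G} (D : LHSeq ι G m)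
    (hfree : Function.Injective (D.pk 0)) :
    (∀ φ : G →* G, ∃ n : ℕ, CoherentlyLifts D φ n) ∧
    (∀ n : ℕ, {φ : G →* G | CoherentlyLifts D φ n} ⊆ {φ | CoherentlyLifts D φ (n + 1)}) ∧
    (⋃ n : ℕ, {φ : G →* G | CoherentlyLifts D φ n}) = Set.univ := by
  refine ⟨exists_coherentlyLifts D, ?_, ?_⟩
  · rintro n φ ⟨ψ, hψ, h⟩
    exact ⟨ψ, hψ, fun k hk => h k (by omega)⟩
  · exact eq_univ_of_forall fun φ => mem_iUnion.mpr (exists_coherentlyLifts D φ)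

end LacHyp
end

section
/- Let G be a lacunary hyperbolic group written as a direct limit of δ_k-hyperbolic marked groups (G_k,S_k) with inj(η_k)/δ_k → ∞, with G_0 a free group with basis S_0. Let φ be a surjective endomorphism of G, let φ̃_0 be a lift of φ to G_0 with |φ̃_0| = |φ| inducing lifts φ̃_k : G_k → G_k for all k ≥ n. Then φ̃_k is surjective for all sufficiently large k. -/
/-!
Choose preimages under `φ` of the finitely many generators of `G` and write them as words `w i`.
The relations `ψ (w i) = of i` hold in the direct limit `G`, and there are finitely many of them,
so by `LHSeq.limit` they already hold in `G_k` for all large `k` (kernels only grow, see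
`ker_mono_le`). There the range of `φ̃_k` contains all generators.
-/

open Filter Set Function

namespace LacHyp

theorem ker_mono_le {ι : Type} [Fintype ι] [DecidableEq ι] {G : Type*} [Group G]
    {m : FreeGroup ι →* G} (D : LHSeq ι G m) {j k : ℕ} (h : j ≤ k) :
    (D.pk j).ker ≤ (D.pk k).ker :=
  monotone_nat_of_le_succ (f := fun k => (D.pk k).ker) D.ker_mono h

/-- step of the proof of Theorem 4.2: if `φ` is a surjective
endomorphism of `G` and `φ̃_0` is a lift of `φ` to the free group `G_0` with
`|φ̃_0| = |φ|` inducing lifts `φ̃_k` on `G_k` for all `k ≥ n`, then `φ̃_k` is surjective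
for all sufficiently large `k`. -/
theorem lift_surjective_eventually {ι : Type} [Fintype ι] [DecidableEq ι]
    {G : Type} [Group G] {m : FreeGroup ι →* G} (D : LHSeq ι G m)
    (hfree : Function.Injective (D.pk 0))
    (φ : G →* G) (hφ : Function.Surjective φ)
    (ψ : FreeGroup ι →* FreeGroup ι)
    (hlift : m.comp ψ = φ.comp m)
    (hnorm : (Finset.univ.sup fun i : ι => (ψ (FreeGroup.of i)).norm) = enorm m φ)
    (n : ℕ) (hind : ∀ k, n ≤ k → LiftsAt D ψ k) :
    ∃ K : ℕ, ∀ k, K ≤ k → ∀ φk : D.Gk k →* D.Gk k,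
      φk.comp (D.pk k) = (D.pk k).comp ψ → Function.Surjective φk := by
  choose w hw using fun i : ι => (hφ.comp D.m_surj) (m (FreeGroup.of i))
  have hrel : ∀ i, m (ψ (w i) * (FreeGroup.of i)⁻¹) = 1 := fun i => by
    have h : m (ψ (w i)) = φ (m (w i)) := DFunLike.congr_fun hlift (w i)
    rw [map_mul, map_inv, h, mul_inv_eq_one]
    exact hw i
  choose κ hκ using fun i => D.limit _ (hrel i)
  refine ⟨Finset.univ.sup κ, fun k hk φk hφk => ?_⟩
  -- All generators of `G_k` lie in the range of `φk`, so the whole range of `pk k` does.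
  have hrange : (⊤ : Subgroup (FreeGroup ι)) ≤ φk.range.comap (D.pk k) := by
    rw [← FreeGroup.closure_range_of, Subgroup.closure_le]
    rintro _ ⟨i, rfl⟩
    refine ⟨D.pk k (w i), ?_⟩
    have h1 : φk (D.pk k (w i)) = D.pk k (ψ (w i)) := DFunLike.congr_fun hφk (w i)
    have h2 : D.pk k (ψ (w i) * (FreeGroup.of i)⁻¹) = 1 :=
      ker_mono_le D ((Finset.le_sup (Finset.mem_univ i)).trans hk) (hκ i)
    rw [map_mul, map_inv, mul_inv_eq_one] at h2
    exact h1.trans h2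
  intro g
  obtain ⟨v, rfl⟩ := D.pk_surj k g
  exact hrange (Subgroup.mem_top v)

end LacHyp
end

section
/- Let G be a non-elementary hyperbolic group, A a finite group, φ : A → Aut(G) a homomorphism with E_{G⋊_φ A}(G) trivial, and B a finite group containing A as a proper subgroup. Set H = (G⋊_φ A) ∗_A B. Then H is hyperbolic and E_H(G) is trivial. -/
/-! Why the theorem holds.

*A word metric invariant under `A`.* The union of the `A`-translates of a finite generating set of
`G` is a finite generating set whose word length is invariant under the action of `A`. That the
four-point condition survives the change of generating set is the quasi-isometry invariance of
hyperbolicity. It is obtained from a guessing-geodesics criterion (`Guess.fourPt`): the geodesics of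
the old metric are a family of connecting sets in the new one with uniformly thin triangles, and
such a family forces the new metric to be hyperbolic (`FourPt.of_biLipschitz`,
`exists_invariant_marking`).

*Hyperbolicity of the amalgam.* The coset space `H/A` is a tree-like union of copies of the coset
spaces of the factors, namely `(G ⋊ A)/A`, which is `G` with its invariant word metric, and the
finite set `B/A`, any two copies meeting in at most one point. The distance from `A` to `hA` is the
sum `sylSum` of the lengths of the syllables in the normal form of `h`. The four-point condition of
the pieces passes to a tree-like union with the same constant (`sylSum_fourPt`), and the word length
of `H` for the generating set made of generators of `G` and all of `B` differs from `sylSum` by at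
most one (`pushout_hyperbolic`).

*Triviality of `E_H(G)`.* If `h` has a finite `G`-orbit then it commutes with infinitely many
elements of `G`, since `G` is infinite. If `h` were outside `G ⋊ A`, the normal form shows that the
intersection of `G ⋊ A` with its conjugate by `h` is conjugate into `A`, hence finite
(`exists_conj_mem`), a contradiction. So `h` lies in `G ⋊ A`, and the hypothesis on
`E_{G ⋊ A}(G)` gives `h = 1` (`pushout_EHset`).
-/

open Filter Set Function

namespace LacHyp

/-- The two-element family of groups `{G ⋊[φ] A, B}` used to form the amalgamated
product `(G ⋊[φ] A) ∗_A B`. -/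
def amalgFam (G A B : Type) [Group G] [Group A] [Group B] (φ : A →* MulAut G) :
    Bool → Type
  | true => G ⋊[φ] A
  | false => B

instance amalgFamGroup (G A B : Type) [Group G] [Group A] [Group B]
    (φ : A →* MulAut G) : ∀ b, Group (amalgFam G A B φ b)
  | true => inferInstanceAs (Group (G ⋊[φ] A))
  | false => inferInstanceAs (Group B)

/-- The structural maps from `A` into the two factors: `A → G ⋊[φ] A` (as `inr`) and
`j : A → B`. -/
def amalgMaps (G A B : Type) [Group G] [Group A] [Group B] (φ : A →* MulAut G)
    (j : A →* B) : ∀ b : Bool, A →* amalgFam G A B φ b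
  | true => SemidirectProduct.inr
  | false => j

/-- The amalgamated product `H = (G ⋊[φ] A) ∗_A B`. -/
def Amalg (G A B : Type) [Group G] [Group A] [Group B] (φ : A →* MulAut G)
    (j : A →* B) : Type :=
  Monoid.PushoutI (amalgMaps G A B φ j)

noncomputable instance (G A B : Type) [Group G] [Group A] [Group B]
    (φ : A →* MulAut G) (j : A →* B) : Group (Amalg G A B φ j) :=
  inferInstanceAs (Group (Monoid.PushoutI (amalgMaps G A B φ j)))

/-- The natural embedding `G → (G ⋊[φ] A) ∗_A B`. -/
noncomputable def amalgInl (G A B : Type) [Group G] [Group A] [Group B]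
    (φ : A →* MulAut G) (j : A →* B) : G →* Amalg G A B φ j :=
  (Monoid.PushoutI.of (φ := amalgMaps G A B φ j) true).comp
    (SemidirectProduct.inl (φ := φ))

/-! ### Hyperbolicity from a thin family of guessed geodesics -/

/-- Gromov's four-point condition for an integer-valued distance, with the maximum on the
right-hand side spelled out as a disjunction. -/
def FourPt {X : Type*} (d : X → X → ℕ) (E : ℕ) : Prop :=
  ∀ x y z w, d x y + d z w ≤ d x z + d y w + E ∨ d x y + d z w ≤ d x w + d y z + E

/-- An integer-valued pseudo-distance in which every pair of points is joined by a discrete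
geodesic. -/
structure GraphMetric {X : Type*} (d : X → X → ℕ) : Prop where
  self : ∀ x, d x x = 0
  symm : ∀ x y, d x y = d y x
  tri : ∀ x y z, d x z ≤ d x y + d y z
  geod : ∀ x y k, k ≤ d x y → ∃ z, d x z = k ∧ d z y = d x y - k

/-- The interval between `x` and `y`: the union of all geodesics from `x` to `y`. -/
def Itv {X : Type*} (d : X → X → ℕ) (x y : X) : Set X := {z | d x z + d z y = d x y}

section Guess

variable {X : Type*} {d : X → X → ℕ}

/-- Discrete connectedness of intervals. -/
theorem GraphMetric.cross (hd : GraphMetric d) (n : ℕ) :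
    ∀ (x y : X) (P Q : X → Prop), d x y = n → P x → Q y → (∀ r ∈ Itv d x y, P r ∨ Q r) →
      ∃ r ∈ Itv d x y, ∃ r' ∈ Itv d x y, d r r' ≤ 1 ∧ P r ∧ Q r' := by
  induction n with
  | zero =>
    intro x y P Q h hP hQ _
    exact ⟨x, by simp [Itv, hd.self], y, by simp [Itv, hd.self], by omega, hP, hQ⟩
  | succ n ih =>
    intro x y P Q h hP hQ hr
    obtain ⟨z, hz1, hz2⟩ := hd.geod x y 1 (by omega)
    have hzm : z ∈ Itv d x y := by simp only [Itv, mem_ofPred_eq]; omega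
    have hsub : Itv d z y ⊆ Itv d x y := by
      intro r hr
      simp only [Itv, mem_ofPred_eq] at *
      have := hd.tri x z r
      have := hd.tri x r y
      omega
    rcases hr z hzm with hz | hz
    · obtain ⟨r, hr1, r', hr2, h3⟩ := ih z y P Q (by omega) hz hQ (fun r h => hr r (hsub h))
      exact ⟨r, hsub hr1, r', hsub hr2, h3⟩
    · exact ⟨x, by simp [Itv, hd.self], z, hzm, by omega, hP, hz⟩

/-- A family of sets `A x y`, thought of as approximations to geodesics from `x` to `y`:
they are coarsely connected, bounded when `x` and `y` are adjacent, and form thin triangles. -/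
structure Guess (d : X → X → ℕ) (A : X → X → Set X) (D : ℕ) : Prop where
  conn : ∀ (x y : X) (P Q : X → Prop), P x → Q y → (∀ r ∈ A x y, P r ∨ Q r) →
    ∃ r ∈ A x y, ∃ r' ∈ A x y, d r r' ≤ D ∧ P r ∧ Q r'
  small : ∀ x y, d x y ≤ 1 → ∀ p ∈ A x y, d x p ≤ D
  thin : ∀ x y z, ∀ p ∈ A x y, ∃ q, (q ∈ A x z ∨ q ∈ A z y) ∧ d p q ≤ D

variable {A : X → X → Set X} {D : ℕ}

/-- Repeated halving of a geodesic: guesses diverge at most logarithmically from intervals. -/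
theorem Guess.log (hd : GraphMetric d) (hA : Guess d A D) (n : ℕ) :
    ∀ x y, d x y ≤ 2 ^ n → ∀ p ∈ A x y, ∃ q ∈ Itv d x y, d p q ≤ D * (n + 1) := by
  induction n with
  | zero =>
    intro x y h p hp
    refine ⟨x, by simp [Itv, hd.self], ?_⟩
    have := hA.small x y (by simpa using h) p hp
    rw [hd.symm]; simpa using this
  | succ n ih =>
    intro x y h p hp
    obtain ⟨z, hz1, hz2⟩ := hd.geod x y (d x y / 2) (by omega)
    rw [pow_succ] at h
    obtain ⟨p', hp', hpp⟩ := hA.thin x y z p hp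
    have key : ∃ q ∈ Itv d x y, d p' q ≤ D * (n + 1) := by
      rcases hp' with hp' | hp'
      · obtain ⟨q, hq, hq'⟩ := ih x z (by omega) p' hp'
        refine ⟨q, ?_, hq'⟩
        simp only [Itv, mem_ofPred_eq] at *
        have := hd.tri q z y
        have := hd.tri x q y
        omega
      · obtain ⟨q, hq, hq'⟩ := ih z y (by omega) p' hp'
        refine ⟨q, ?_, hq'⟩
        simp only [Itv, mem_ofPred_eq] at *
        have := hd.tri x z q
        have := hd.tri x q y
        omega
    obtain ⟨q, hq, hq'⟩ := key
    refine ⟨q, hq, ?_⟩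
    have := hd.tri p p' q
    have e : D * (n + 1 + 1) = D * (n + 1) + D := by ring
    omega

/-- If guesses between points at distance at most `N` stay `T`-close to intervals, the bound
can be lowered to `T - 1` as long as `T` exceeds the logarithmic bound at scale `T`. -/
theorem Guess.improve (hd : GraphMetric d) (hA : Guess d A D) (N T n : ℕ)
    (hT : ∀ x y, d x y ≤ N → ∀ p ∈ A x y, ∃ q ∈ Itv d x y, d p q ≤ T)
    (h1 : 4 * T + 4 * D + 2 ≤ 2 ^ n) (h2 : D * (n + 3) < T) (h3 : 3 * D < T) :
    ∀ x y, d x y ≤ N → ∀ p ∈ A x y, ∃ q ∈ Itv d x y, d p q ≤ T - 1 := by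
  intro x y hxy p hp
  by_contra! hcon
  obtain ⟨q, hq, hpq⟩ := hT x y hxy p hp
  -- the points `a` and `b` lie on a geodesic through `q`, too far from `q` for a guess ending
  -- at `a` or starting at `b` to come near `p`
  obtain ⟨a, ha1, ha2⟩ := hd.geod x q (d x q - min (d x q) (2 * T + 2 * D + 1)) (by omega)
  obtain ⟨b, hb1, hb2⟩ := hd.geod q y (min (d q y) (2 * T + 2 * D + 1)) (by omega)
  simp only [Itv, mem_ofPred_eq] at hq hcon
  have t1 := hd.tri a q b
  have t2 := hd.tri x a y
  have t3 := hd.tri a b y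
  have t4 := hd.tri x q b
  have t5 := hd.tri a q y
  have t6 := hd.tri x b y
  have t7 := hd.tri x a b
  have eD : D * (n + 3) = D * (n + 1) + 2 * D := by ring
  have hx0 := hd.self x
  have hy0 := hd.self y
  obtain ⟨p1, hp1, hpp1⟩ := hA.thin x y a p hp
  have farx : ∀ p1 ∈ A x a, T ≤ d p p1 + D ∨ 2 * D < d p p1 := by
    intro p1 hp1
    by_contra! hc
    by_cases hxa : d x a ≤ 1
    · have := hA.small x a hxa p1 hp1
      have := hcon x (by omega)
      have := hd.tri p p1 x
      have := hd.symm x p1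
      omega
    · obtain ⟨r, hr, hr'⟩ := hT x a (by omega) p1 hp1
      simp only [Itv, mem_ofPred_eq] at hr
      have := hd.tri x r q
      have := hd.tri r p1 q
      have := hd.tri p1 p q
      have := hd.symm r p1
      have := hd.symm p1 p
      omega
  have fary : ∀ p1 ∈ A b y, 2 * D < d p p1 := by
    intro p1 hp1
    by_contra! hc
    by_cases hby : d b y ≤ 1
    · have := hA.small b y hby p1 hp1
      have := hcon b (by omega)
      have := hd.tri p p1 b
      have := hd.symm b p1
      omega
    · obtain ⟨r, hr, hr'⟩ := hT b y (by omega) p1 hp1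
      simp only [Itv, mem_ofPred_eq] at hr
      have := hd.tri q r y
      have := hd.tri q p1 r
      have := hd.tri q p p1
      have := hd.symm q p
      omega
  rcases hp1 with hp1 | hp1
  · have := farx p1 hp1
    omega
  · obtain ⟨p2, hp2, hpp2⟩ := hA.thin a y b p1 hp1
    have t8 := hd.tri p p1 p2
    rcases hp2 with hp2 | hp2
    · obtain ⟨r, hr, hr'⟩ := hA.log hd n a b (by omega) p2 hp2
      simp only [Itv, mem_ofPred_eq] at hr
      have u1 := hd.tri x a r
      have u2 := hd.tri r b y
      have u3 := hd.tri x r y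
      have := hcon r (by omega)
      have := hd.tri p p2 r
      omega
    · have := fary p2 hp2
      omega

theorem exists_scale (D : ℕ) : ∃ K, 3 * D ≤ K ∧ ∀ T, K < T →
    ∃ n, 4 * T + 4 * D + 2 ≤ 2 ^ n ∧ D * (n + 3) < T := by
  have hev : ∃ n0, ∀ n, n0 ≤ n → 4 * (D + 1) * (n + 4) + 4 * D + 2 ≤ 2 ^ n := by
    refine ⟨16 * (D + 1) + 16, fun n hn => ?_⟩
    -- `2 ^ n` dominates a fourth power of `n / 4`
    have h2 : (2 ^ (n / 4)) ^ 4 ≤ 2 ^ n := by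
      rw [← pow_mul]; exact Nat.pow_le_pow_right (by norm_num) (by omega)
    have h3 := Nat.lt_two_pow_self (n := n / 4)
    obtain ⟨k, hk⟩ : ∃ k, k = n / 4 := ⟨_, rfl⟩
    have hkD : 4 * (D + 1) + 4 ≤ k := by omega
    have hnk : n + 4 ≤ 4 * k + 8 := by omega
    have h4 : (k + 1) ^ 4 ≤ (2 ^ (n / 4)) ^ 4 := Nat.pow_le_pow_left (by omega) 4
    have h5 : 4 * (D + 1) * (n + 4) ≤ k * (4 * k + 8) := Nat.mul_le_mul (by omega) hnk
    have h6 : k * (4 * k + 8) + k ≤ (k + 1) ^ 4 := by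
      have : 8 ≤ k := by omega
      nlinarith [pow_pos (show 0 < k by omega) 2, pow_pos (show 0 < k by omega) 3]
    omega
  obtain ⟨n0, hn0⟩ := hev
  refine ⟨(D + 1) * (n0 + 4), by nlinarith, fun T hT => ?_⟩
  have hq := Nat.div_add_mod (T - 1) (D + 1)
  have hr := Nat.mod_lt (T - 1) (show 0 < D + 1 by omega)
  have hle : n0 + 4 ≤ (T - 1) / (D + 1) := by
    rw [Nat.le_div_iff_mul_le (by omega), mul_comm]
    omega
  obtain ⟨n, hn⟩ := Nat.exists_eq_add_of_le hle
  refine ⟨n0 + n + 1, ?_, ?_⟩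
  · have := hn0 (n0 + n + 1) (by omega)
    have e : (D + 1) * ((T - 1) / (D + 1)) + (D + 1) = (D + 1) * (n0 + n + 1 + 4) := by
      rw [hn]; ring
    have e2 : 4 * (D + 1) * (n0 + n + 1 + 4) = 4 * ((D + 1) * (n0 + n + 1 + 4)) := by ring
    omega
  · have e : (D + 1) * ((T - 1) / (D + 1)) = D * (n0 + n + 1 + 3) + (n0 + n + 4) := by
      rw [hn]; ring
    omega

/-- Guesses stay uniformly close to intervals. -/
theorem Guess.close (hd : GraphMetric d) (hA : Guess d A D) :
    ∃ K, ∀ x y, ∀ p ∈ A x y, ∃ q ∈ Itv d x y, d p q ≤ K := by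
  obtain ⟨K, hK, hs⟩ := exists_scale D
  refine ⟨K, fun x0 y0 => ?_⟩
  have desc : ∀ m, ∀ x y, d x y ≤ d x0 y0 → ∀ p ∈ A x y, ∃ q ∈ Itv d x y,
      d p q ≤ max K (D * (d x0 y0 + 1) - m) := by
    intro m
    induction m with
    | zero =>
      intro x y h p hp
      obtain ⟨q, hq, hq'⟩ := hA.log hd (d x0 y0) x y (h.trans Nat.lt_two_pow_self.le) p hp
      exact ⟨q, hq, hq'.trans (by simp)⟩
    | succ m ih =>
      by_cases hc : D * (d x0 y0 + 1) - m ≤ K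
      · intro x y h p hp
        obtain ⟨q, hq, hq'⟩ := ih x y h p hp
        exact ⟨q, hq, by omega⟩
      · rw [max_eq_right (by omega)] at ih
        obtain ⟨n, h1, h2⟩ := hs _ (not_le.mp hc)
        have := hA.improve hd _ _ n ih h1 h2 (by omega)
        intro x y h p hp
        obtain ⟨q, hq, hq'⟩ := this x y h p hp
        exact ⟨q, hq, by omega⟩
  intro p hp
  obtain ⟨q, hq, hle⟩ := desc (D * (d x0 y0 + 1)) x0 y0 le_rfl p hp
  exact ⟨q, hq, by simpa using hle⟩

/-- Conversely, intervals stay uniformly close to guesses. -/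
theorem Guess.close' (hd : GraphMetric d) (hA : Guess d A D) :
    ∃ K, ∀ x y, ∀ q ∈ Itv d x y, ∃ p ∈ A x y, d q p ≤ K := by
  obtain ⟨K, hK⟩ := hA.close hd
  refine ⟨3 * (D + K) + D, fun x y q hq => ?_⟩
  -- points of `A x y` are close either to a geodesic from `x` to `q` or to one from `q` to `y`;
  -- by connectedness both happen almost simultaneously, and this can only be near `q`
  have near : ∀ r ∈ A x y, (∃ s ∈ Itv d x q, d r s ≤ D + K) ∨ (∃ s ∈ Itv d q y, d r s ≤ D + K) := by
    intro r hr
    obtain ⟨r', hr', hrr⟩ := hA.thin x y q r hr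
    rcases hr' with hr' | hr'
    · obtain ⟨s, hs, hs'⟩ := hK _ _ _ hr'
      exact Or.inl ⟨s, hs, (hd.tri r r' s).trans (by omega)⟩
    · obtain ⟨s, hs, hs'⟩ := hK _ _ _ hr'
      exact Or.inr ⟨s, hs, (hd.tri r r' s).trans (by omega)⟩
  obtain ⟨r, hr, r', hr', hrr, ⟨s, hs, hs'⟩, ⟨t, ht, ht'⟩⟩ :=
    hA.conn x y _ _ ⟨x, by simp [Itv, hd.self], by simp [hd.self]⟩
      ⟨y, by simp [Itv, hd.self], by simp [hd.self]⟩ near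
  refine ⟨r, hr, ?_⟩
  simp only [Itv, mem_ofPred_eq] at *
  have := hd.tri x s y
  have := hd.tri s t y
  have := hd.tri s r t
  have := hd.tri r r' t
  have := hd.tri q s r
  have := hd.symm q s
  have := hd.symm s r
  omega

/-- A graph metric admitting a thin family of guessed geodesics is hyperbolic. -/
theorem Guess.fourPt (hd : GraphMetric d) (hA : Guess d A D) : ∃ E, FourPt d E := by
  obtain ⟨K, hK⟩ := hA.close hd
  obtain ⟨K', hK'⟩ := hA.close' hd
  obtain ⟨C, hC⟩ : ∃ C, C = K' + D + K := ⟨_, rfl⟩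
  have thin : ∀ x y z, ∀ p ∈ Itv d x y,
      (∃ s ∈ Itv d x z, d p s ≤ C) ∨ (∃ s ∈ Itv d z y, d p s ≤ C) := by
    intro x y z p hp
    obtain ⟨r, hr, hpr⟩ := hK' x y p hp
    obtain ⟨r', hr', hrr⟩ := hA.thin x y z r hr
    rcases hr' with hr' | hr'
    · obtain ⟨s, hs, hs'⟩ := hK _ _ _ hr'
      have := hd.tri p r s
      have := hd.tri r r' s
      exact Or.inl ⟨s, hs, by omega⟩
    · obtain ⟨s, hs, hs'⟩ := hK _ _ _ hr'
      have := hd.tri p r s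
      have := hd.tri r r' s
      exact Or.inr ⟨s, hs, by omega⟩
  refine ⟨8 * C + 8, fun x y z w => ?_⟩
  have side : ∀ x z p, (∃ s ∈ Itv d x z, d p s ≤ C) → d x p + d p z ≤ d x z + 2 * C := by
    rintro x z p ⟨s, hs, hs'⟩
    simp only [Itv, mem_ofPred_eq] at hs
    have := hd.tri x s p
    have := hd.tri p s z
    have := hd.symm s p
    omega
  -- a point `p` on a geodesic from `x` to `y` which is close to both other sides of `x, y, z`
  obtain ⟨p, hp, p', hp', hpp, hP, hQ⟩ := hd.cross _ x y
    (fun p => d x p + d p z ≤ d x z + 2 * C) (fun p => d z p + d p y ≤ d z y + 2 * C) rfl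
    (by simp [hd.self]) (by simp [hd.self])
    (fun r hr => (thin x y z r hr).imp (side x z r) (side z y r))
  have thinw : ∀ r ∈ Itv d x y,
      d x r + d r w ≤ d x w + 2 * C ∨ d w r + d r y ≤ d w y + 2 * C :=
    fun r hr => (thin x y w r hr).imp (side x w r) (side w y r)
  simp only [Itv, mem_ofPred_eq] at hp hp'
  rcases thinw p hp with hw | hw
  · obtain ⟨q, hq, q', hq', hqq, hP', hQ'⟩ := hd.cross _ p y
      (fun p => d x p + d p w ≤ d x w + 2 * C) (fun p => d w p + d p y ≤ d w y + 2 * C) rfl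
      hw (by simp [hd.self]) (fun r hr => thinw r (by
        simp only [Itv, mem_ofPred_eq] at hr ⊢
        have := hd.tri x p r
        have := hd.tri x r y
        omega))
    right
    simp only [Itv, mem_ofPred_eq] at hq hq'
    have := hd.tri x q y
    have := hd.tri z p w
    have := hd.tri p q w
    have := hd.tri z p' p
    have := hd.tri p p' y
    have := hd.symm p p'
    have := hd.symm z p
    have := hd.symm z y
    omega
  · obtain ⟨q, hq, q', hq', hqq, hP', hQ'⟩ := hd.cross _ x p
      (fun p => d x p + d p w ≤ d x w + 2 * C) (fun p => d w p + d p y ≤ d w y + 2 * C) rfl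
      (by simp [hd.self]) hw (fun r hr => thinw r (by
        simp only [Itv, mem_ofPred_eq] at hr ⊢
        have := hd.tri r p y
        have := hd.tri x r y
        omega))
    left
    simp only [Itv, mem_ofPred_eq] at hq hq'
    have := hd.tri x q' y
    have := hd.tri q' p y
    have := hd.tri z p w
    have := hd.tri p q' w
    have := hd.symm p q'
    have := hd.symm q' w
    have := hd.symm z p
    have := hd.symm z y
    have := hd.symm w y
    omega

end Guess

/-- Hyperbolicity is preserved when a graph metric is replaced by a bi-Lipschitz equivalent
one: intervals of the first metric serve as guessed geodesics for the second. -/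
theorem FourPt.of_biLipschitz {X : Type*} {d d' : X → X → ℕ} (hd : GraphMetric d)
    (hd' : GraphMetric d') {c E : ℕ} (h1 : ∀ x y, d' x y ≤ d x y) (h2 : ∀ x y, d x y ≤ c * d' x y)
    (hE : FourPt d E) : ∃ E', FourPt d' E' := by
  refine Guess.fourPt hd' (A := fun x y => Itv d x y) (D := c + 2 * E + 1) ⟨?_, ?_, ?_⟩
  · intro x y P Q hP hQ hr
    obtain ⟨r, hr, r', hr', h, h'⟩ := hd.cross _ x y P Q rfl hP hQ hr
    exact ⟨r, hr, r', hr', by have := h1 r r'; omega, h'⟩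
  · intro x y hxy p hp
    simp only [Itv, mem_ofPred_eq] at hp
    have := h1 x p
    have := h2 x y
    have : c * d' x y ≤ c * 1 := Nat.mul_le_mul_left _ hxy
    omega
  · intro x y z p hp
    simp only [Itv, mem_ofPred_eq] at hp ⊢
    have s1 := hd.symm z p
    have s2 := hd.symm z y
    have s3 := hd.symm y p
    rcases hE x y z p with h | h
    · obtain ⟨q, hq1, hq2⟩ := hd.geod x z (min (d x p) (d x z)) (by omega)
      refine ⟨q, Or.inl (by omega), ?_⟩
      have s4 := hd.symm q z
      have := h1 p q
      have := hE x z p q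
      have := hd.tri x z p
      omega
    · obtain ⟨q, hq1, hq2⟩ := hd.geod y z (min (d y p) (d y z)) (by omega)
      have s4 := hd.symm q z
      have s5 := hd.symm y q
      refine ⟨q, Or.inr (by omega), ?_⟩
      have := h1 p q
      have := hE y z p q
      have := hd.tri y z p
      omega

/-! ### Word length -/

section WordLength

variable {ι : Type} [DecidableEq ι] {H : Type*} [Group H] {p : FreeGroup ι →* H}

theorem wlen_le (w : FreeGroup ι) : wlen p (p w) ≤ w.norm := Nat.sInf_le ⟨w, rfl, rfl⟩

theorem exists_wlen (hp : Function.Surjective p) (g : H) :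
    ∃ w : FreeGroup ι, p w = g ∧ w.norm = wlen p g := by
  obtain ⟨w, hw⟩ := hp g
  exact Nat.sInf_mem (s := {n | ∃ w : FreeGroup ι, p w = g ∧ w.norm = n}) ⟨_, w, hw, rfl⟩

theorem wlen_one : wlen p (1 : H) = 0 := by
  have := wlen_le (p := p) 1
  simpa using this

theorem wlen_of (i : ι) : wlen p (p (FreeGroup.of i)) ≤ 1 := by
  simpa using wlen_le (p := p) (FreeGroup.of i)

theorem wlen_mul (hp : Function.Surjective p) (g h : H) :
    wlen p (g * h) ≤ wlen p g + wlen p h := by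
  obtain ⟨v, rfl, hv⟩ := exists_wlen hp g
  obtain ⟨w, rfl, hw⟩ := exists_wlen hp h
  rw [← hv, ← hw, ← map_mul]
  exact (wlen_le _).trans (FreeGroup.norm_mul_le v w)

theorem wlen_inv_le (hp : Function.Surjective p) (g : H) : wlen p g⁻¹ ≤ wlen p g := by
  obtain ⟨v, rfl, hv⟩ := exists_wlen hp g
  rw [← hv, ← map_inv, ← FreeGroup.norm_inv_eq (x := v)]
  exact wlen_le _

theorem wlen_inv (hp : Function.Surjective p) (g : H) : wlen p g⁻¹ = wlen p g :=
  le_antisymm (wlen_inv_le hp g) (by simpa using wlen_inv_le hp g⁻¹)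

theorem wlen_eq_zero (hp : Function.Surjective p) {g : H} (h : wlen p g = 0) : g = 1 := by
  obtain ⟨v, rfl, hv⟩ := exists_wlen hp g
  rw [h, FreeGroup.norm_eq_zero] at hv
  simp [hv]

/-- A function on the group that grows by at most `c` under left multiplication by a generator
or its inverse is bounded by `c` times the word length. -/
theorem le_wlen (hp : Function.Surjective p) (f : H → ℕ) (c : ℕ) (h1 : f 1 = 0)
    (h2 : ∀ i g, f (p (FreeGroup.of i) * g) ≤ c + f g)
    (h3 : ∀ i g, f ((p (FreeGroup.of i))⁻¹ * g) ≤ c + f g) (g : H) : f g ≤ c * wlen p g := by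
  obtain ⟨v, rfl, hv⟩ := exists_wlen hp g
  rw [← hv, FreeGroup.norm, ← FreeGroup.mk_toWord (x := v), FreeGroup.toWord_mk,
    FreeGroup.reduce_toWord]
  induction v.toWord with
  | nil => simp [← FreeGroup.one_eq_mk, h1]
  | cons a l ih =>
    obtain ⟨i, b⟩ := a
    have e : FreeGroup.mk ((i, b) :: l) = FreeGroup.mk [(i, b)] * FreeGroup.mk l := by
      rw [FreeGroup.mul_mk]; rfl
    rw [e, map_mul, List.length_cons, mul_add, mul_one, add_comm]
    cases b with
    | true => exact (h2 i _).trans (by omega)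
    | false =>
      have e2 : FreeGroup.mk [(i, false)] = (FreeGroup.of i)⁻¹ := by
        simp [FreeGroup.of, FreeGroup.invRev]
      rw [e2, map_inv]
      exact (h3 i _).trans (by omega)

/-- The word metric is a graph metric. -/
theorem wlen_graphMetric (hp : Function.Surjective p) :
    GraphMetric (fun x y : H => wlen p (x⁻¹ * y)) where
  self x := by simp [wlen_one]
  symm x y := by
    rw [← wlen_inv hp]; simp
  tri x y z := by
    have := wlen_mul hp (x⁻¹ * y) (y⁻¹ * z)
    simpa [mul_assoc] using this
  geod x y k hk := by
    -- cut a shortest word for `x⁻¹ * y` after `k` letters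
    obtain ⟨v, hv, hn⟩ := exists_wlen hp (x⁻¹ * y)
    have e : v = FreeGroup.mk (v.toWord.take k) * FreeGroup.mk (v.toWord.drop k) := by
      rw [FreeGroup.mul_mk, List.take_append_drop, FreeGroup.mk_toWord]
    have l1 := (wlen_le (p := p) (FreeGroup.mk (v.toWord.take k))).trans FreeGroup.norm_mk_le
    have l2 := (wlen_le (p := p) (FreeGroup.mk (v.toWord.drop k))).trans FreeGroup.norm_mk_le
    have l3 := wlen_mul hp (p (FreeGroup.mk (v.toWord.take k))) (p (FreeGroup.mk (v.toWord.drop k)))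
    rw [← map_mul, ← e, hv, ← hn] at l3
    rw [← hn] at hk ⊢
    rw [List.length_take] at l1
    rw [List.length_drop] at l2
    unfold FreeGroup.norm at *
    refine ⟨x * p (FreeGroup.mk (v.toWord.take k)), ?_, ?_⟩
    · rw [inv_mul_cancel_left]; omega
    · have : (x * p (FreeGroup.mk (v.toWord.take k)))⁻¹ * y
          = p (FreeGroup.mk (v.toWord.drop k)) := by
        have hv' : x⁻¹ * y = p (FreeGroup.mk (v.toWord.take k))
            * p (FreeGroup.mk (v.toWord.drop k)) := by rw [← map_mul, ← e, hv]
        rw [mul_inv_rev, mul_assoc, hv', inv_mul_cancel_left]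
      rw [this]; omega

theorem markedHyperbolic_of_fourPt {E : ℕ} (h : FourPt (fun x y : H => wlen p (x⁻¹ * y)) E) :
    MarkedHyperbolic p E := by
  intro x y z w
  have h0 : (0 : ℝ) ≤ E := Nat.cast_nonneg E
  rcases h x y z w with h | h
  · have h' : (wlen p (x⁻¹ * y) : ℝ) + wlen p (z⁻¹ * w)
        ≤ wlen p (x⁻¹ * z) + wlen p (y⁻¹ * w) + E := by exact_mod_cast h
    have := le_max_left ((wlen p (x⁻¹ * z) : ℝ) + wlen p (y⁻¹ * w))
      ((wlen p (x⁻¹ * w) : ℝ) + wlen p (y⁻¹ * z))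
    linarith
  · have h' : (wlen p (x⁻¹ * y) : ℝ) + wlen p (z⁻¹ * w)
        ≤ wlen p (x⁻¹ * w) + wlen p (y⁻¹ * z) + E := by exact_mod_cast h
    have := le_max_right ((wlen p (x⁻¹ * z) : ℝ) + wlen p (y⁻¹ * w))
      ((wlen p (x⁻¹ * w) : ℝ) + wlen p (y⁻¹ * z))
    linarith

theorem fourPt_of_markedHyperbolic {δ : ℝ} (h : MarkedHyperbolic p δ) :
    FourPt (fun x y : H => wlen p (x⁻¹ * y)) ⌈2 * δ⌉₊ := by
  intro x y z w
  have hE := Nat.le_ceil (2 * δ)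
  have h' := h x y z w
  rcases max_cases ((wlen p (x⁻¹ * z) : ℝ) + wlen p (y⁻¹ * w))
      ((wlen p (x⁻¹ * w) : ℝ) + wlen p (y⁻¹ * z)) with hm | hm
  · left
    have : (wlen p (x⁻¹ * y) : ℝ) + wlen p (z⁻¹ * w)
        ≤ wlen p (x⁻¹ * z) + wlen p (y⁻¹ * w) + ⌈2 * δ⌉₊ := by linarith
    exact_mod_cast this
  · right
    have : (wlen p (x⁻¹ * y) : ℝ) + wlen p (z⁻¹ * w)
        ≤ wlen p (x⁻¹ * w) + wlen p (y⁻¹ * z) + ⌈2 * δ⌉₊ := by linarith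
    exact_mod_cast this

end WordLength

/-- A hyperbolic group with an action of a finite group `A` by automorphisms has a finite
marking whose word length is `A`-invariant and satisfies the four-point condition. The
generating set is the union of the `A`-translates of a given one. -/
theorem exists_invariant_marking {G A : Type} [Group G] [Group A] [Finite A]
    (hG : HyperbolicGroup G) (φ : A →* MulAut G) :
    ∃ (κ : Type) (_ : Fintype κ) (_ : DecidableEq κ) (q : FreeGroup κ →* G) (E : ℕ),
      Function.Surjective q ∧ FourPt (fun x y : G => wlen q (x⁻¹ * y)) E ∧
      ∀ a g, wlen q (φ a g) = wlen q g := by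
  classical
  obtain ⟨ι, _, _, p, δ, hp, -, hδ⟩ := hG
  have : Fintype A := Fintype.ofFinite A
  let q : FreeGroup (ι × A) →* G := FreeGroup.lift fun s => φ s.2 (p (FreeGroup.of s.1))
  have hqof : ∀ i a, q (FreeGroup.of (i, a)) = φ a (p (FreeGroup.of i)) := by
    intro i a; simp [q]
  have hqp : q.comp (FreeGroup.map fun i => (i, (1 : A))) = p := by
    ext i; simp [hqof]
  have hq : Function.Surjective q := by
    intro g
    obtain ⟨w, rfl⟩ := hp g
    exact ⟨FreeGroup.map (fun i => (i, (1 : A))) w, DFunLike.congr_fun hqp w⟩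
  have inv_le : ∀ a g, wlen q (φ a g) ≤ wlen q g := by
    intro a g
    have key : ∀ s : ι × A, wlen q (φ a (q (FreeGroup.of s))) ≤ 1 := by
      rintro ⟨i, b⟩
      have := wlen_of (p := q) (i, a * b)
      rw [hqof, map_mul, MulAut.mul_apply] at this
      rwa [hqof]
    have := le_wlen hq (fun g => wlen q (φ a g)) 1 (by simp [wlen_one])
      (fun s g => by
        simp only [map_mul]
        exact (wlen_mul hq _ _).trans (Nat.add_le_add_right (key s) _))
      (fun s g => by
        simp only [map_mul, map_inv]
        refine (wlen_mul hq _ _).trans (Nat.add_le_add_right ?_ _)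
        rw [wlen_inv hq]; exact key s) g
    simpa using this
  have hqle : ∀ g, wlen q g ≤ wlen p g := by
    intro g
    have key : ∀ i, wlen q (p (FreeGroup.of i)) ≤ 1 := by
      intro i
      have := wlen_of (p := q) (i, (1 : A))
      simpa [hqof] using this
    have := le_wlen hp (fun g => wlen q g) 1 wlen_one
      (fun s g => (wlen_mul hq _ _).trans (Nat.add_le_add_right (key s) _))
      (fun s g => by
        refine (wlen_mul hq _ _).trans (Nat.add_le_add_right ?_ _)
        rw [wlen_inv hq]; exact key s) g
    simpa using this
  obtain ⟨c, hc⟩ : ∃ c, ∀ g, wlen p g ≤ c * wlen q g := by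
    let c := Finset.univ.sup fun s : ι × A => wlen p (q (FreeGroup.of s))
    have key : ∀ s, wlen p (q (FreeGroup.of s)) ≤ c := fun s =>
      Finset.le_sup (f := fun s : ι × A => wlen p (q (FreeGroup.of s))) (Finset.mem_univ s)
    refine ⟨c, fun g => ?_⟩
    exact le_wlen hq (fun g => wlen p g) c wlen_one
      (fun s g => (wlen_mul hp _ _).trans (Nat.add_le_add_right (key s) _))
      (fun s g => by
        refine (wlen_mul hp _ _).trans (Nat.add_le_add_right ?_ _)
        rw [wlen_inv hp]; exact key s) g
  obtain ⟨E, hE⟩ := FourPt.of_biLipschitz (wlen_graphMetric hp) (wlen_graphMetric hq)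
    (fun x y => hqle _) (fun x y => hc _) (fourPt_of_markedHyperbolic hδ)
  refine ⟨ι × A, inferInstance, inferInstance, q, E, hq, hE, fun a g => ?_⟩
  refine le_antisymm (inv_le a g) ?_
  have := inv_le a⁻¹ (φ a g)
  simpa using this

/-! ### Syllable lengths on amalgamated products -/

section Amalgam

open Monoid Monoid.PushoutI Monoid.PushoutI.NormalWord

variable {ι : Type*} {F : ι → Type*} {A : Type*} [∀ i, Group (F i)] [Group A]
  {φ : ∀ i, A →* F i}

/-- A family of lengths on the factors of an amalgam vanishing exactly on the amalgamated
subgroup `A`. By the triangle inequality such lengths are bi-invariant under `A`. -/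
structure SylLen (φ : ∀ i, A →* F i) (L : ∀ i, F i → ℕ) : Prop where
  zero : ∀ i g, L i g = 0 ↔ g ∈ (φ i).range
  inv : ∀ i g, L i g⁻¹ = L i g
  mul : ∀ i g h, L i (g * h) ≤ L i g + L i h

theorem SylLen.left {L : ∀ i, F i → ℕ} (hL : SylLen φ L) (i : ι) (a : A) (g : F i) :
    L i (φ i a * g) = L i g := by
  have h0 := (hL.zero i (φ i a)).2 ⟨a, rfl⟩
  have h1 := hL.mul i (φ i a) g
  have h2 := hL.mul i (φ i a)⁻¹ (φ i a * g)
  rw [inv_mul_cancel_left, hL.inv] at h2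
  omega

theorem SylLen.right {L : ∀ i, F i → ℕ} (hL : SylLen φ L) (i : ι) (a : A) (g : F i) :
    L i (g * φ i a) = L i g := by
  have := hL.left i a⁻¹ g⁻¹
  rwa [map_inv, ← mul_inv_rev, hL.inv, hL.inv] at this

theorem SylLen.pos {L : ∀ i, F i → ℕ} (hL : SylLen φ L) {i : ι} {s : F i}
    (hs : s ∉ (φ i).range) : 0 < L i s :=
  Nat.pos_of_ne_zero fun h => hs ((hL.zero i s).1 h)

variable [DecidableEq ι] [∀ i, DecidableEq (F i)] (d : Transversal φ)

/-- The total length of the syllables in the normal form of `h`. -/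
noncomputable def sylSum (L : ∀ i, F i → ℕ) (h : PushoutI φ) : ℕ :=
  ((equiv (d := d) h).toList.map fun s => L s.1 s.2).sum

/-- The normal form of `h` does not start with a syllable from the factor `i`. -/
def NotStart (i : ι) (h : PushoutI φ) : Prop := (equiv (d := d) h).fstIdx ≠ some i

variable {d}

theorem equiv_base_mul (a : A) (h : PushoutI φ) :
    (equiv (d := d) (base φ a * h)).toWord = (equiv (d := d) h).toWord := by
  simp only [equiv, Equiv.coe_fn_mk, mul_smul, base_smul_def]

theorem notStart_base_mul {i : ι} {a : A} {h : PushoutI φ} :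
    NotStart d i (base φ a * h) ↔ NotStart d i h := by
  rw [NotStart, equiv_base_mul, NotStart]

theorem sylSum_base_mul (L : ∀ i, F i → ℕ) (a : A) (h : PushoutI φ) :
    sylSum d L (base φ a * h) = sylSum d L h := by
  rw [sylSum, equiv_base_mul, sylSum]

theorem equiv_one : equiv (d := d) (1 : PushoutI φ) = empty := by
  simp [equiv]

theorem notStart_base (i : ι) (a : A) : NotStart d i (base φ a) := by
  rw [← mul_one (base φ a), notStart_base_mul, NotStart, equiv_one]
  simp [empty, CoprodI.Word.fstIdx, CoprodI.Word.empty]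

theorem sylSum_base (L : ∀ i, F i → ℕ) (a : A) : sylSum d L (base φ a) = 0 := by
  rw [← mul_one (base φ a), sylSum_base_mul, sylSum, equiv_one]
  simp [empty, CoprodI.Word.empty]

theorem equiv_of_mul {i : ι} {s : F i} {h : PushoutI φ} (hs : s ∉ (φ i).range)
    (hh : NotStart d i h) : equiv (d := d) (of i s * h) = cons s (equiv (d := d) h) hh hs := by
  refine Eq.trans ?_ (cons_eq_smul s (equiv (d := d) h) hh hs).symm
  simp only [equiv, Equiv.coe_fn_mk, mul_smul]

theorem notStart_of_mul {i k : ι} (hik : i ≠ k) {s : F i} {h : PushoutI φ}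
    (hs : s ∉ (φ i).range) (hh : NotStart d i h) : NotStart d k (of i s * h) := by
  rw [NotStart, equiv_of_mul hs hh]
  simpa [cons, CoprodI.Word.fstIdx, CoprodI.Word.cons] using hik

theorem sylSum_of_mul {L : ∀ i, F i → ℕ} (hL : SylLen φ L) {i : ι} (s : F i) {h : PushoutI φ}
    (hh : NotStart d i h) : sylSum d L (of i s * h) = L i s + sylSum d L h := by
  by_cases hs : s ∈ (φ i).range
  · obtain ⟨a, rfl⟩ := hs
    rw [of_apply_eq_base, sylSum_base_mul, (hL.zero i _).2 ⟨a, rfl⟩, zero_add]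
  · rw [sylSum, equiv_of_mul hs hh]
    simp only [cons, CoprodI.Word.cons, List.map_cons, List.sum_cons]
    rw [Subgroup.IsComplement.equiv_snd_eq_inv_mul]
    congr 1
    obtain ⟨a, ha⟩ := ((d.compl i).equiv (s * φ i (equiv (d := d) h).head)).1.2
    rw [← ha, ← map_inv, hL.left, hL.right]

/-- Induction on the normal form. -/
theorem syl_induction {P : PushoutI φ → Prop} (d : Transversal φ) (h : PushoutI φ)
    (h0 : ∀ a, P (base φ a))
    (h1 : ∀ i s h', s ∉ (φ i).range → NotStart d i h' → P h' → P (of i s * h')) : P h := by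
  suffices H : ∀ w : NormalWord d, ∀ a, P (base φ a * w.prod) by
    have := H (equiv h) 1
    rw [map_one, one_mul] at this
    rwa [show (equiv (d := d) h).prod = h from equiv.symm_apply_apply h] at this
  intro w
  induction w using consRecOn with
  | empty => intro a; simpa using h0 a
  | cons i g w hmw hgn hgr hw1 ih =>
    intro a
    rw [prod_cons, ← mul_assoc, ← of_apply_eq_base φ i, ← map_mul]
    refine h1 i _ _ ?_ ?_ (by simpa using ih 1)
    · rwa [Subgroup.mul_mem_cancel_left _ (MonoidHom.mem_range.2 ⟨a, rfl⟩)]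
    · rwa [NotStart, show equiv (d := d) w.prod = w from equiv.apply_symm_apply w]
  | base h w _ ih =>
    intro a
    rw [prod_smul, ← mul_assoc, ← map_mul]
    exact ih _

/-- Splitting off the part of the normal form lying in a given factor. -/
theorem exists_split (d : Transversal φ) (i : ι) (h : PushoutI φ) :
    ∃ s h', NotStart d i h' ∧ h = of i s * h' := by
  induction h using syl_induction d with
  | h0 a => exact ⟨φ i a, 1, by simpa using notStart_base (d := d) i 1, by simp [of_apply_eq_base]⟩
  | h1 k s h' hs hh _ =>
    by_cases hik : k = i
    · subst hik; exact ⟨s, h', hh, rfl⟩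
    · exact ⟨1, _, notStart_of_mul hik hs hh, by simp⟩

variable {L : ∀ i, F i → ℕ}

theorem sylSum_of (hL : SylLen φ L) (i : ι) (s : F i) : sylSum d L (of i s) = L i s := by
  have h := sylSum_of_mul hL s (notStart_base (d := d) i 1)
  rwa [sylSum_base, map_one, mul_one, add_zero] at h

theorem sylSum_one : sylSum d L 1 = 0 := by
  simpa using sylSum_base (d := d) L 1

theorem sylSum_of_mul_le (hL : SylLen φ L) (i : ι) (s : F i) (h : PushoutI φ) :
    sylSum d L (of i s * h) ≤ L i s + sylSum d L h := by
  obtain ⟨t, h', hh, rfl⟩ := exists_split d i h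
  rw [← mul_assoc, ← map_mul, sylSum_of_mul hL _ hh, sylSum_of_mul hL _ hh]
  have := hL.mul i s t
  omega

theorem sylSum_mul_le (hL : SylLen φ L) (g h : PushoutI φ) :
    sylSum d L (g * h) ≤ sylSum d L g + sylSum d L h := by
  induction g using syl_induction d with
  | h0 a => rw [sylSum_base_mul]; omega
  | h1 i s g' hs hg ih =>
    rw [sylSum_of_mul hL _ hg, mul_assoc]
    have := sylSum_of_mul_le (d := d) hL i s (g' * h)
    omega

theorem sylSum_inv_le (hL : SylLen φ L) (g : PushoutI φ) :
    sylSum d L g⁻¹ ≤ sylSum d L g := by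
  induction g using syl_induction d with
  | h0 a => rw [← map_inv, sylSum_base]; omega
  | h1 i s g' hs hg ih =>
    rw [sylSum_of_mul hL _ hg, mul_inv_rev, ← map_inv]
    have := sylSum_mul_le (d := d) hL g'⁻¹ (of i s⁻¹)
    rw [sylSum_of hL, hL.inv] at this
    omega

theorem sylSum_inv (hL : SylLen φ L) (g : PushoutI φ) : sylSum d L g⁻¹ = sylSum d L g :=
  le_antisymm (sylSum_inv_le hL g) (by simpa using sylSum_inv_le (d := d) hL g⁻¹)

/-- There is no cancellation in `x⁻¹ u y` when `u` is a syllable of a factor from which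
neither `x` nor `y` starts. -/
theorem sylSum_inv_mul_of_mul (hL : SylLen φ L) (x : PushoutI φ) :
    ∀ (i : ι) (u : F i) (y : PushoutI φ), u ∉ (φ i).range → NotStart d i x → NotStart d i y →
      sylSum d L (x⁻¹ * (of i u * y)) = sylSum d L x + L i u + sylSum d L y := by
  induction x using syl_induction d with
  | h0 a =>
    intro i u y hu _ hy
    rw [← map_inv, sylSum_base_mul, sylSum_base, sylSum_of_mul hL _ hy]; omega
  | h1 k s x' hs hx ih =>
    intro i u y hu hx2 hy
    have hki : k ≠ i := by
      rintro rfl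
      rw [NotStart, equiv_of_mul hs hx] at hx2
      simp [cons, CoprodI.Word.fstIdx, CoprodI.Word.cons] at hx2
    have := ih k s⁻¹ (of i u * y) (by simpa using hs) hx (notStart_of_mul (Ne.symm hki) hu hy)
    rw [mul_inv_rev, mul_assoc, ← map_inv, this, sylSum_of_mul hL _ hy, sylSum_of_mul hL _ hx,
      hL.inv]
    omega

theorem sylDist_le (hL : SylLen φ L) (i : ι) (s t : F i) (x y : PushoutI φ) :
    sylSum d L ((of i s * x)⁻¹ * (of i t * y))
      ≤ sylSum d L x + L i (s⁻¹ * t) + sylSum d L y := by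
  rw [mul_inv_rev, ← map_inv, mul_assoc, ← mul_assoc (of i s⁻¹), ← map_mul]
  have h1 := sylSum_mul_le (d := d) hL x⁻¹ (of i (s⁻¹ * t) * y)
  have h2 := sylSum_of_mul_le (d := d) hL i (s⁻¹ * t) y
  rw [sylSum_inv hL] at h1
  omega

theorem sylDist_eq (hL : SylLen φ L) {i : ι} {s t : F i} {x y : PushoutI φ}
    (hx : NotStart d i x) (hy : NotStart d i y) (hst : L i (s⁻¹ * t) ≠ 0) :
    sylSum d L ((of i s * x)⁻¹ * (of i t * y))
      = sylSum d L x + L i (s⁻¹ * t) + sylSum d L y := by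
  rw [mul_inv_rev, ← map_inv, mul_assoc, ← mul_assoc (of i s⁻¹), ← map_mul]
  exact sylSum_inv_mul_of_mul hL x i _ y (fun h => hst ((hL.zero i _).2 h)) hx hy

/-- An element of nonzero length starts with a syllable in some factor. -/
theorem exists_first {h : PushoutI φ} (hh : sylSum d L h ≠ 0) :
    ∃ i s h', s ∉ (φ i).range ∧ NotStart d i h' ∧ h = of i s * h' := by
  induction h using syl_induction d with
  | h0 a => exact absurd (sylSum_base L a) hh
  | h1 k s h' hs hns _ => exact ⟨k, s, h', hs, hns, rfl⟩

/-- The four-point condition for `1, x, y, z`, in its fully symmetric form. -/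
def FourPtBase {H : Type*} [Group H] (ℓ : H → ℕ) (E : ℕ) (x y z : H) : Prop :=
  (ℓ x + ℓ (y⁻¹ * z) ≤ ℓ y + ℓ (x⁻¹ * z) + E ∨ ℓ x + ℓ (y⁻¹ * z) ≤ ℓ z + ℓ (x⁻¹ * y) + E) ∧
  (ℓ y + ℓ (x⁻¹ * z) ≤ ℓ x + ℓ (y⁻¹ * z) + E ∨ ℓ y + ℓ (x⁻¹ * z) ≤ ℓ z + ℓ (x⁻¹ * y) + E) ∧
  (ℓ z + ℓ (x⁻¹ * y) ≤ ℓ x + ℓ (y⁻¹ * z) + E ∨ ℓ z + ℓ (x⁻¹ * y) ≤ ℓ y + ℓ (x⁻¹ * z) + E)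

/-- The four-point condition for the factors passes to the amalgam, with the same constant:
the coset space of `A` in the amalgam is a tree-like union of copies of its coset spaces in the
factors, glued at points. The proof projects `1, x, y, z` to a copy of a factor containing `1` and
the first syllable of `x`. Unless
`x, y, z` all have the same projection, the inequality follows from the one in the factor;
otherwise a common first syllable can be removed. -/
theorem fourPtBase_of_pos (hL : SylLen φ L) {E : ℕ}
    (hE : ∀ i, FourPt (fun s t : F i => L i (s⁻¹ * t)) E) (N : ℕ)
    (ih : ∀ x y z, sylSum d L x + sylSum d L y + sylSum d L z ≤ N →
      FourPtBase (sylSum d L) E x y z) (x y z : PushoutI φ)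
    (hN : sylSum d L x + sylSum d L y + sylSum d L z ≤ N + 1) (hx : sylSum d L x ≠ 0) :
    FourPtBase (sylSum d L) E x y z := by
  obtain ⟨i, s, x', hs, hx', rfl⟩ := exists_first hx
  obtain ⟨t, y', hy', rfl⟩ := exists_split d i y
  obtain ⟨u, z', hz', rfl⟩ := exists_split d i z
  have hpos := hL.pos hs
  rw [sylSum_of_mul hL _ hx', sylSum_of_mul hL _ hy', sylSum_of_mul hL _ hz'] at hN
  have tri : ∀ a b c : F i, L i (a⁻¹ * c) ≤ L i (a⁻¹ * b) + L i (b⁻¹ * c) := by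
    intro a b c
    simpa [mul_assoc] using hL.mul i (a⁻¹ * b) (b⁻¹ * c)
  have symm : ∀ a b : F i, L i (a⁻¹ * b) = L i (b⁻¹ * a) := by
    intro a b
    rw [← hL.inv]; simp
  have one1 : ∀ a : F i, L i ((1 : F i)⁻¹ * a) = L i a := by simp
  by_cases hall : L i (s⁻¹ * t) = 0 ∧ L i (s⁻¹ * u) = 0
  · obtain ⟨⟨a, ha⟩, ⟨b, hb⟩⟩ := And.imp (hL.zero i _).1 (hL.zero i _).1 hall
    have et : of i t * y' = of i s * (base φ a * y') := by
      rw [← of_apply_eq_base φ i, ha, ← mul_assoc, ← map_mul, mul_inv_cancel_left]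
    have eu : of i u * z' = of i s * (base φ b * z') := by
      rw [← of_apply_eq_base φ i, hb, ← mul_assoc, ← map_mul, mul_inv_cancel_left]
    have hy2 := (notStart_base_mul (a := a)).2 hy'
    have hz2 := (notStart_base_mul (a := b)).2 hz'
    have hst : L i s = L i t := by
      rw [← hL.right i a s, ha, mul_inv_cancel_left]
    have hsu : L i s = L i u := by
      rw [← hL.right i b s, hb, mul_inv_cancel_left]
    have := ih x' (base φ a * y') (base φ b * z') (by
      rw [sylSum_base_mul, sylSum_base_mul]; omega)
    rw [et, eu]
    have canc : ∀ v w : PushoutI φ, (of i s * v)⁻¹ * (of i s * w) = v⁻¹ * w := by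
      intro v w; simp [mul_assoc]
    unfold FourPtBase at this ⊢
    rw [canc, canc, canc, sylSum_of_mul hL _ hx', sylSum_of_mul hL _ hy2, sylSum_of_mul hL _ hz2]
    omega
  · have f1 := hE i 1 s t u
    have f2 := hE i 1 t s u
    have f3 := hE i 1 u s t
    have a1 := tri 1 s t
    have a2 := tri 1 t s
    have a3 := tri 1 s u
    have a4 := tri 1 u s
    have a5 := tri 1 t u
    have a6 := tri 1 u t
    have a7 := tri s t u
    have a8 := tri s u t
    have a9 := tri t s u
    have b1 := tri s 1 t
    have b2 := tri s 1 u
    have b3 := tri t 1 u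
    have c1 := symm s t
    have c2 := symm s u
    have c3 := symm t u
    have c4 := symm s 1
    have c5 := symm t 1
    have c6 := symm u 1
    simp only [one1] at *
    have dst := sylDist_le (d := d) hL i s t x' y'
    have dsu := sylDist_le (d := d) hL i s u x' z'
    have dtu := sylDist_le (d := d) hL i t u y' z'
    have est := sylDist_eq hL (s := s) (t := t) hx' hy'
    have esu := sylDist_eq hL (s := s) (t := u) hx' hz'
    have etu := sylDist_eq hL (s := t) (t := u) hy' hz'
    unfold FourPtBase
    rw [sylSum_of_mul hL _ hx', sylSum_of_mul hL _ hy', sylSum_of_mul hL _ hz']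
    omega

theorem FourPtBase.swap12 {H : Type*} [Group H] {ℓ : H → ℕ} (hℓ : ∀ g, ℓ g⁻¹ = ℓ g) {E : ℕ}
    {x y z : H} (h : FourPtBase ℓ E x y z) : FourPtBase ℓ E y x z := by
  have h1 : ℓ (y⁻¹ * x) = ℓ (x⁻¹ * y) := by rw [← hℓ]; simp
  unfold FourPtBase at *
  rw [h1]; omega

theorem FourPtBase.swap23 {H : Type*} [Group H] {ℓ : H → ℕ} (hℓ : ∀ g, ℓ g⁻¹ = ℓ g) {E : ℕ}
    {x y z : H} (h : FourPtBase ℓ E x y z) : FourPtBase ℓ E x z y := by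
  have h1 : ℓ (z⁻¹ * y) = ℓ (y⁻¹ * z) := by rw [← hℓ]; simp
  unfold FourPtBase at *
  rw [h1]; omega

theorem sylSum_fourPt (hL : SylLen φ L) {E : ℕ}
    (hE : ∀ i, FourPt (fun s t : F i => L i (s⁻¹ * t)) E) :
    FourPt (fun x y : PushoutI φ => sylSum d L (x⁻¹ * y)) E := by
  have key : ∀ N, ∀ x y z, sylSum d L x + sylSum d L y + sylSum d L z ≤ N →
      FourPtBase (sylSum d L) E x y z := by
    have zero : ∀ x y z, sylSum d L x = 0 → sylSum d L y = 0 → sylSum d L z = 0 →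
        FourPtBase (sylSum d L) E x y z := by
      intro x y z hx hy hz
      have h1 := sylSum_mul_le (d := d) hL x⁻¹ y
      have h2 := sylSum_mul_le (d := d) hL x⁻¹ z
      have h3 := sylSum_mul_le (d := d) hL y⁻¹ z
      rw [sylSum_inv hL] at h1 h2 h3
      unfold FourPtBase; omega
    intro N
    induction N with
    | zero => intro x y z h; exact zero x y z (by omega) (by omega) (by omega)
    | succ N ih =>
      intro x y z h
      by_cases hx : sylSum d L x = 0
      · by_cases hy : sylSum d L y = 0
        · by_cases hz : sylSum d L z = 0
          · exact zero x y z hx hy hz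
          · exact ((fourPtBase_of_pos hL hE N ih z x y (by omega) hz).swap12
              (sylSum_inv hL)).swap23 (sylSum_inv hL)
        · exact (fourPtBase_of_pos hL hE N ih y x z (by omega) hy).swap12 (sylSum_inv hL)
      · exact fourPtBase_of_pos hL hE N ih x y z h hx
  intro x y z w
  have := key _ (x⁻¹ * y) (x⁻¹ * z) (x⁻¹ * w) le_rfl
  have canc : ∀ v w : PushoutI φ, (x⁻¹ * v)⁻¹ * (x⁻¹ * w) = v⁻¹ * w := by
    intro v w; simp [mul_assoc]
  unfold FourPtBase at this
  rw [canc, canc, canc] at this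
  have h1 : sylSum d L (z⁻¹ * w) = sylSum d L (w⁻¹ * z) := by rw [← sylSum_inv hL]; simp
  dsimp only
  omega

/-- If `h` does not lie in the factor `i`, then the elements of that factor whose conjugates by
`h` still lie in the factor are conjugate, by one element of the factor, into `A`. -/
theorem exists_conj_mem (i : ι) (h : PushoutI φ) (hh : h ∉ (of (φ := φ) i).range)
    (d : Transversal φ) :
    ∃ s : F i, ∀ g, h * of i g * h⁻¹ ∈ (of (φ := φ) i).range → s * g * s⁻¹ ∈ (φ i).range := by
  classical
  -- count syllables
  let L : ∀ i, F i → ℕ := fun i g => if g ∈ (φ i).range then 0 else 1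
  have hL : SylLen φ L := by
    refine ⟨fun i g => by simp [L], fun i g => by simp only [L, inv_mem_iff], fun i g k => ?_⟩
    by_cases hg : g ∈ (φ i).range
    · by_cases hk : k ∈ (φ i).range
      · simp only [L, if_pos (mul_mem hg hk)]; omega
      · simp only [L, if_neg hk]; split_ifs <;> omega
    · simp only [L, if_neg hg]; split_ifs <;> omega
  obtain ⟨s, x, hx, e⟩ := exists_split d i h⁻¹
  refine ⟨s⁻¹, fun g hg => ?_⟩
  by_contra hcon
  have eh : h = x⁻¹ * of i s⁻¹ := by
    rw [← inv_inv h, e, mul_inv_rev, map_inv]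
  have key := sylSum_inv_mul_of_mul hL x i (s⁻¹ * g * s⁻¹⁻¹) x hcon hx hx
  have e2 : x⁻¹ * (of i (s⁻¹ * g * s⁻¹⁻¹) * x) = h * of i g * h⁻¹ := by
    rw [e, eh]; simp [mul_assoc]
  obtain ⟨k, hk⟩ := hg
  rw [e2, ← hk, sylSum_of hL] at key
  have hk1 : L i k ≤ 1 := by simp only [L]; split_ifs <;> omega
  have hg1 := hL.pos hcon
  have hx0 : sylSum d L x = 0 := by omega
  apply hh
  obtain ⟨a, ha⟩ : ∃ a, x = base φ a := by
    by_contra hne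
    have : sylSum d L x ≠ 0 := by
      clear * - hne hL
      induction x using syl_induction d with
      | h0 a => exact absurd ⟨a, rfl⟩ hne
      | h1 k s h' hs hh _ =>
        have := hL.pos hs
        rw [sylSum_of_mul hL _ hh]; omega
    exact this hx0
  rw [eh, ha, ← of_apply_eq_base φ i]
  exact mul_mem (inv_mem ⟨_, rfl⟩) ⟨_, rfl⟩

end Amalgam

/-! ### Syllable lengths on the factors `G ⋊ A` and `B` -/

section Factors

open Monoid Monoid.PushoutI

variable {G A B κ : Type} [Group G] [Group A] [Group B] [DecidableEq κ] {φ : A →* MulAut G}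
  {q : FreeGroup κ →* G}

open Classical in
/-- The lengths on the factors: the word length of the `G`-component on `G ⋊ A`, which is the word
metric on the cosets of `A`, and the discrete length on the finite group `B`. -/
noncomputable def amalgLen (φ : A →* MulAut G) (q : FreeGroup κ →* G) (j : A →* B) :
    ∀ b, amalgFam G A B φ b → ℕ
  | true => fun k : G ⋊[φ] A => wlen q k.left
  | false => fun b : B => if b ∈ j.range then 0 else 1

theorem amalgLen_true (j : A →* B) (k : G ⋊[φ] A) : amalgLen φ q j true k = wlen q k.left := rfl

theorem amalgLen_false_le (j : A →* B) (b : B) : amalgLen φ q j false b ≤ 1 := by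
  classical
  change (if b ∈ j.range then 0 else 1) ≤ 1
  split_ifs <;> omega

theorem amalgLen_sylLen (hq : Function.Surjective q) (hinv : ∀ a g, wlen q (φ a g) = wlen q g)
    (j : A →* B) : SylLen (amalgMaps G A B φ j) (amalgLen φ q j) := by
  classical
  refine ⟨?_, ?_, ?_⟩
  · rintro (_ | _) g
    · have key : ∀ b : B, (if b ∈ j.range then 0 else 1) = 0 ↔ b ∈ j.range := by simp
      exact key g
    · change wlen q (SemidirectProduct.left g) = 0 ↔
        g ∈ (SemidirectProduct.inr : A →* G ⋊[φ] A).range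
      constructor
      · intro h
        refine ⟨SemidirectProduct.right g, SemidirectProduct.ext ?_ rfl⟩
        exact (wlen_eq_zero hq h).symm
      · rintro ⟨a, rfl⟩
        exact wlen_one
  · rintro (_ | _) g
    · have key : ∀ b : B, (if b⁻¹ ∈ j.range then 0 else 1) = if b ∈ j.range then 0 else 1 := by
        simp only [inv_mem_iff, implies_true]
      exact key g
    · change wlen q (φ (SemidirectProduct.right g)⁻¹ (SemidirectProduct.left g)⁻¹)
        = wlen q (SemidirectProduct.left g)
      rw [hinv, wlen_inv hq]
  · rintro (_ | _) g h
    · have key : ∀ b c : B, (if b * c ∈ j.range then 0 else 1)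
          ≤ (if b ∈ j.range then 0 else 1) + if c ∈ j.range then 0 else 1 := by
        intro b c
        by_cases hb : b ∈ j.range
        · rw [Subgroup.mul_mem_cancel_left _ hb, if_pos hb, zero_add]
        · rw [if_neg hb]; split_ifs <;> omega
      exact key g h
    · change wlen q (SemidirectProduct.left g *
          φ (SemidirectProduct.right g) (SemidirectProduct.left h))
        ≤ wlen q (SemidirectProduct.left g) + wlen q (SemidirectProduct.left h)
      exact (wlen_mul hq _ _).trans (by rw [hinv])

theorem amalgLen_fourPt {E : ℕ} (hE : FourPt (fun x y : G => wlen q (x⁻¹ * y)) E)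
    (hinv : ∀ a g, wlen q (φ a g) = wlen q g) (j : A →* B) (b : Bool) :
    FourPt (fun s t : amalgFam G A B φ b => amalgLen φ q j b (s⁻¹ * t)) (E + 2) := by
  cases b with
  | false =>
    intro x y z w
    have h1 := amalgLen_false_le (φ := φ) (q := q) j ((x : B)⁻¹ * (y : B))
    have h2 := amalgLen_false_le (φ := φ) (q := q) j ((z : B)⁻¹ * (w : B))
    left
    change amalgLen φ q j false ((x : B)⁻¹ * (y : B)) +
      amalgLen φ q j false ((z : B)⁻¹ * (w : B)) ≤ _
    omega
  | true =>
    have key : ∀ s t : G ⋊[φ] A, amalgLen φ q j true (s⁻¹ * t) = wlen q (s.left⁻¹ * t.left) := by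
      intro s t
      rw [amalgLen_true, SemidirectProduct.mul_left, SemidirectProduct.inv_left,
        SemidirectProduct.inv_right, ← map_mul, hinv]
    have main : FourPt (fun s t : G ⋊[φ] A => amalgLen φ q j true (s⁻¹ * t)) (E + 2) := by
      intro x y z w
      have := hE x.left y.left z.left w.left
      dsimp only at this ⊢
      rw [key x y, key z w, key x z, key y w, key x w, key y z]
      omega
    exact main

theorem amalgMaps_injective {j : A →* B} (hj : Function.Injective j) (b : Bool) :
    Function.Injective (amalgMaps G A B φ j b) := by
  cases b with
  | false => exact hj
  | true => exact SemidirectProduct.inr_injective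

/-- The amalgam is hyperbolic for the generating set consisting of generators of `G` and of all
elements of `B`: the word length differs from the syllable length by at most one. -/
theorem pushout_hyperbolic [Fintype κ] [Finite B] {E : ℕ} (hq : Function.Surjective q)
    (hE : FourPt (fun x y : G => wlen q (x⁻¹ * y)) E)
    (hinv : ∀ a g, wlen q (φ a g) = wlen q g) {j : A →* B} (hj : Function.Injective j) :
    HyperbolicGroup (PushoutI (amalgMaps G A B φ j)) := by
  classical
  have : Fintype B := Fintype.ofFinite B
  obtain ⟨d⟩ := NormalWord.transversal_nonempty (amalgMaps G A B φ j)
    (amalgMaps_injective hj)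
  have hL := amalgLen_sylLen (q := q) hq hinv j
  let ofK : G ⋊[φ] A →* PushoutI (amalgMaps G A B φ j) :=
    PushoutI.of (φ := amalgMaps G A B φ j) true
  let ofB : B →* PushoutI (amalgMaps G A B φ j) :=
    PushoutI.of (φ := amalgMaps G A B φ j) false
  have baseK : ∀ a, PushoutI.base (amalgMaps G A B φ j) a = ofK (SemidirectProduct.inr a) :=
    fun a => (PushoutI.of_apply_eq_base (amalgMaps G A B φ j) true a).symm
  have baseB : ∀ a, PushoutI.base (amalgMaps G A B φ j) a = ofB (j a) :=
    fun a => (PushoutI.of_apply_eq_base (amalgMaps G A B φ j) false a).symm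
  let P : FreeGroup (κ ⊕ B) →* PushoutI (amalgMaps G A B φ j) := FreeGroup.lift fun s =>
    s.elim (fun i => ofK (SemidirectProduct.inl (q (FreeGroup.of i)))) ofB
  have Pl : ∀ i, P (FreeGroup.of (Sum.inl i)) = ofK (SemidirectProduct.inl (q (FreeGroup.of i))) :=
    fun i => by simp [P]
  have Pr : ∀ b, P (FreeGroup.of (Sum.inr b)) = ofB b := fun b => by simp [P]
  have hBr : ∀ b, ofB b ∈ P.range := fun b => ⟨_, Pr b⟩
  have hGr : ∀ g, ofK (SemidirectProduct.inl g) ∈ P.range := by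
    intro g
    obtain ⟨w, rfl⟩ := hq g
    refine ⟨FreeGroup.map Sum.inl w, ?_⟩
    have : P.comp (FreeGroup.map Sum.inl) = (ofK.comp SemidirectProduct.inl).comp q := by
      ext i; simp [Pl]
    exact DFunLike.congr_fun this w
  have hP : Function.Surjective P := by
    intro h
    change h ∈ P.range
    induction h using PushoutI.induction_on with
    | of i s =>
      cases i with
      | false => exact hBr s
      | true =>
        have key : ∀ k : G ⋊[φ] A, ofK k ∈ P.range := by
          intro k
          rw [← SemidirectProduct.inl_left_mul_inr_right k, map_mul, ← baseK, baseB]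
          exact mul_mem (hGr _) (hBr _)
        exact key s
    | base a => rw [baseB]; exact hBr _
    | mul x y hx hy => exact mul_mem hx hy
  have lower : ∀ h, sylSum d (amalgLen φ q j) h ≤ wlen P h := by
    intro h
    have gen : ∀ s : κ ⊕ B, ∀ h, sylSum d (amalgLen φ q j) (P (FreeGroup.of s) * h)
          ≤ 1 + sylSum d (amalgLen φ q j) h ∧
        sylSum d (amalgLen φ q j) ((P (FreeGroup.of s))⁻¹ * h)
          ≤ 1 + sylSum d (amalgLen φ q j) h := by
      have aux : ∀ (b : Bool) (s : amalgFam G A B φ b), amalgLen φ q j b s ≤ 1 → ∀ h,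
          sylSum d (amalgLen φ q j) (PushoutI.of b s * h) ≤ 1 + sylSum d (amalgLen φ q j) h ∧
          sylSum d (amalgLen φ q j) ((PushoutI.of b s)⁻¹ * h)
            ≤ 1 + sylSum d (amalgLen φ q j) h := by
        intro b s hs h
        have h1 := sylSum_of_mul_le (d := d) hL b s h
        have h2 := sylSum_of_mul_le (d := d) hL b s⁻¹ h
        rw [hL.inv, map_inv] at h2
        omega
      rintro (i | b) h
      · rw [Pl]
        exact aux true (SemidirectProduct.inl (φ := φ) (q (FreeGroup.of i)))
          (wlen_of (p := q) i) h
      · rw [Pr]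
        exact aux false _ (amalgLen_false_le j b) h
    have := le_wlen hP (sylSum d (amalgLen φ q j)) 1 sylSum_one
      (fun s h => (gen s h).1) (fun s h => (gen s h).2) h
    simpa using this
  have hGle : ∀ g, wlen P (ofK (SemidirectProduct.inl g)) ≤ wlen q g := by
    intro g
    have gen : ∀ i, wlen P (ofK (SemidirectProduct.inl (q (FreeGroup.of i)))) ≤ 1 := by
      intro i; rw [← Pl]; exact wlen_of _
    have := le_wlen hq (fun g => wlen P (ofK (SemidirectProduct.inl g))) 1 (by simp [wlen_one])
      (fun i g => by
        simp only [map_mul]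
        exact (wlen_mul hP _ _).trans (Nat.add_le_add_right (gen i) _))
      (fun i g => by
        simp only [map_mul, map_inv]
        refine (wlen_mul hP _ _).trans (Nat.add_le_add_right ?_ _)
        rw [wlen_inv hP]; exact gen i) g
    simpa using this
  have hBle : ∀ b, wlen P (ofB b) ≤ 1 := by
    intro b; rw [← Pr]; exact wlen_of _
  -- up to multiplication by an element of `A` on the right, the word length is bounded by the
  -- syllable length
  have upper : ∀ h a, ∃ a', wlen P (PushoutI.base _ a * h * PushoutI.base _ a')
      ≤ sylSum d (amalgLen φ q j) h := by
    intro h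
    induction h using syl_induction d with
    | h0 a0 =>
      intro a
      refine ⟨(a * a0)⁻¹, ?_⟩
      rw [← map_mul, ← map_mul, mul_inv_cancel, map_one, wlen_one]
      omega
    | h1 i s h' hs hh ih =>
      intro a
      rw [sylSum_of_mul hL s hh]
      cases i with
      | false =>
        have key : ∀ b : B, ∃ a', wlen P (PushoutI.base _ a * (ofB b * h') *
            PushoutI.base _ a') ≤ 1 + sylSum d (amalgLen φ q j) h' := by
          intro b
          obtain ⟨a', ha'⟩ := ih 1
          refine ⟨a', ?_⟩
          have h2 := wlen_mul hP (ofB (j a * b)) (PushoutI.base _ 1 * h' * PushoutI.base _ a')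
          have h3 := hBle (j a * b)
          have e : PushoutI.base _ a * (ofB b * h') * PushoutI.base _ a'
              = ofB (j a * b) * (PushoutI.base _ 1 * h' * PushoutI.base _ a') := by
            rw [map_mul, ← baseB, map_one, one_mul]
            simp only [mul_assoc]
          rw [e]
          omega
        obtain ⟨a', ha'⟩ := key s
        exact ⟨a', ha'.trans (Nat.add_le_add_right (hL.pos hs) _)⟩
      | true =>
        have key : ∀ k : G ⋊[φ] A, ∃ a', wlen P (PushoutI.base _ a * (ofK k * h') *
            PushoutI.base _ a') ≤ wlen q k.left + sylSum d (amalgLen φ q j) h' := by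
          intro k
          obtain ⟨a', ha'⟩ := ih (a * k.right)
          refine ⟨a', ?_⟩
          have h2 := wlen_mul hP (ofK (SemidirectProduct.inl (φ a k.left)))
            (PushoutI.base _ (a * k.right) * h' * PushoutI.base _ a')
          have h3 := hGle (φ a k.left)
          have e : PushoutI.base _ a * (ofK k * h') * PushoutI.base _ a'
              = ofK (SemidirectProduct.inl (φ a k.left)) *
                (PushoutI.base _ (a * k.right) * h' * PushoutI.base _ a') := by
            have e1 : SemidirectProduct.inr a * k =
                SemidirectProduct.inl (φ a k.left) * SemidirectProduct.inr (a * k.right) := by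
              ext <;> simp
            have e2 := congrArg ofK e1
            rw [map_mul, map_mul, ← baseK, ← baseK] at e2
            rw [← mul_assoc, e2]
            simp only [mul_assoc]
          rw [hinv] at h3
          rw [e]
          omega
        exact key s
  have upper' : ∀ h, wlen P h ≤ sylSum d (amalgLen φ q j) h + 1 := by
    intro h
    obtain ⟨a, ha⟩ := upper h 1
    have h1 := wlen_mul hP (PushoutI.base _ 1 * h * PushoutI.base _ a) (ofB (j a))⁻¹
    have h2 := hBle (j a)
    rw [wlen_inv hP, ← baseB, map_one, one_mul, mul_inv_cancel_right] at h1
    rw [map_one, one_mul] at ha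
    rw [← baseB] at h2
    omega
  refine ⟨κ ⊕ B, inferInstance, inferInstance, P, ((E + 2 + 2 : ℕ) : ℝ), hP,
    Nat.cast_nonneg _, markedHyperbolic_of_fourPt ?_⟩
  intro x y z w
  have h := sylSum_fourPt (d := d) hL (fun b => amalgLen_fourPt hE hinv j b) x y z w
  dsimp only at h ⊢
  have l1 := lower (x⁻¹ * z)
  have l2 := lower (y⁻¹ * w)
  have l3 := lower (x⁻¹ * w)
  have l4 := lower (y⁻¹ * z)
  have u1 := upper' (x⁻¹ * y)
  have u2 := upper' (z⁻¹ * w)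
  omega

theorem virtuallyCyclic_of_finite [Finite G] : VirtuallyCyclic G :=
  ⟨⊥, inferInstance, inferInstance⟩

/-- An element outside `G ⋊ A` does not commute with infinitely many elements of `G`, because it
moves the vertex of the Bass-Serre tree fixed by `G ⋊ A` and edge stabilizers are finite. Hence
`E_H(G)` is contained in `G ⋊ A`, where it is trivial by hypothesis. -/
theorem pushout_EHset [Finite A] [Infinite G] {j : A →* B} (hj : Function.Injective j)
    (hEG : EHset (SemidirectProduct.inl (φ := φ)).range = {1}) :
    EHset ((PushoutI.of (φ := amalgMaps G A B φ j) true).comp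
      (SemidirectProduct.inl (φ := φ))).range = {1} := by
  classical
  have hinjf := PushoutI.of_injective (amalgMaps_injective (G := G) (φ := φ) hj) true
  let ofK : G ⋊[φ] A →* PushoutI (amalgMaps G A B φ j) :=
    PushoutI.of (φ := amalgMaps G A B φ j) true
  have hinj : Function.Injective ofK := hinjf
  obtain ⟨d⟩ := NormalWord.transversal_nonempty (amalgMaps G A B φ j)
    (amalgMaps_injective hj)
  refine Set.eq_singleton_iff_unique_mem.2 ⟨?_, ?_⟩
  · refine (Set.finite_singleton 1).subset ?_
    rintro _ ⟨g, rfl⟩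
    simp
  intro h hh
  have horb : (Set.range fun g : G => ofK (SemidirectProduct.inl g) * h *
      (ofK (SemidirectProduct.inl g))⁻¹).Finite := by
    refine Set.Finite.subset hh ?_
    rintro _ ⟨g, rfl⟩
    exact ⟨⟨_, g, rfl⟩, rfl⟩
  by_cases hmem : h ∈ ofK.range
  · obtain ⟨k, rfl⟩ := hmem
    have hk : k ∈ EHset (SemidirectProduct.inl (φ := φ)).range := by
      refine Set.Finite.of_finite_image (f := ofK) (horb.subset ?_) hinj.injOn
      rintro _ ⟨_, ⟨⟨_, g, rfl⟩, rfl⟩, rfl⟩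
      exact ⟨g, by simp⟩
    rw [hEG] at hk
    rw [Set.mem_singleton_iff.1 hk, map_one]
  · exfalso
    have hs' : ∃ t : G ⋊[φ] A, ∀ g : G ⋊[φ] A, h * ofK g * h⁻¹ ∈ ofK.range →
        t * g * t⁻¹ ∈ (SemidirectProduct.inr : A →* G ⋊[φ] A).range :=
      exists_conj_mem true h hmem d
    obtain ⟨t, ht⟩ := hs'
    have hfin : Finite (SemidirectProduct.inr : A →* G ⋊[φ] A).range :=
      Finite.of_surjective _ (MonoidHom.rangeRestrict_surjective _)
    -- infinitely many elements of `G` conjugate `h` to the same element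
    have := horb.to_subtype
    obtain ⟨⟨y, hy⟩, hinf⟩ := Finite.exists_infinite_fiber
      (Set.rangeFactorization fun g : G => ofK (SemidirectProduct.inl g) * h *
        (ofK (SemidirectProduct.inl g))⁻¹)
    obtain ⟨⟨g₀, hg₀⟩⟩ := hinf.nonempty
    refine hinf.not_finite (Finite.of_injective (β := (SemidirectProduct.inr : A →* G ⋊[φ] A).range)
      (fun g => ⟨t * SemidirectProduct.inl (g₀⁻¹ * g.1) * t⁻¹, ht _ ?_⟩) ?_)
    · have e1 := congrArg Subtype.val (show _ = _ from hg₀)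
      have e2 := congrArg Subtype.val (show _ = _ from g.2)
      refine ⟨SemidirectProduct.inl (g₀⁻¹ * g.1), ?_⟩
      have e3 := e2.trans e1.symm
      change ofK (SemidirectProduct.inl g.1) * h * (ofK (SemidirectProduct.inl g.1))⁻¹ =
        ofK (SemidirectProduct.inl g₀) * h * (ofK (SemidirectProduct.inl g₀))⁻¹ at e3
      have comm : ∀ x y : PushoutI (amalgMaps G A B φ j), x * h * x⁻¹ = y * h * y⁻¹ →
          y⁻¹ * x = h * (y⁻¹ * x) * h⁻¹ := by
        intro x y hxy
        rw [mul_inv_eq_iff_eq_mul] at hxy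
        rw [eq_mul_inv_iff_mul_eq, mul_assoc, hxy]
        simp only [mul_assoc, inv_mul_cancel_left]
      have e4 := comm _ _ e3
      rw [← map_inv, ← map_inv, ← map_mul, ← map_mul] at e4
      exact e4
    · intro g g' hgg
      have := congrArg Subtype.val hgg
      simpa [Subtype.ext_iff] using this

end Factors

/-- step of the proof of Proposition 5.2: for a non-elementary
hyperbolic group `G`, finite groups `A < B` with `A` proper in `B`, and an action
`φ : A → Aut(G)` with `E_{G⋊A}(G)` trivial, the amalgam `H = (G ⋊[φ] A) ∗_A B` is
hyperbolic and `E_H(G)` is trivial. -/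
theorem amalgam_hyperbolic_and_EH_trivial (G A B : Type) [Group G] [Group A] [Group B]
    [Finite A] [Finite B]
    (hG : HyperbolicGroup G) (hne : ¬ VirtuallyCyclic G)
    (φ : A →* MulAut G)
    (hEG : EHset (SemidirectProduct.inl (φ := φ)).range = {1})
    (j : A →* B) (hj : Function.Injective j) (hproper : ¬ Function.Surjective j) :
    HyperbolicGroup (Amalg G A B φ j) ∧
      EHset (amalgInl G A B φ j).range = {1} := by
  obtain ⟨κ, _, _, q, E, hq, hE, hinv⟩ := exists_invariant_marking hG φ
  have : Infinite G := by
    by_contra h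
    have : Finite G := not_infinite_iff_finite.1 h
    exact hne virtuallyCyclic_of_finite
  exact ⟨pushout_hyperbolic hq hE hinv hj, pushout_EHset hj hEG⟩

end LacHyp
end
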